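/- Under the stated hypotheses, if ‖V‖ < c_π·d with c_π = (3π − √(π² + 32))/(π² − 4), then ‖E_A(σ) − E_B(O_{d/2}(σ))‖ ≤ (π/2)·‖V‖/(d − δ_V) < 1. -/

import Mathlib

/-- `E` is the projection-valued spectral measure of the bounded self-adjoint operator `T`
on the complex Hilbert space `H`: each `E Δ` (for Borel `Δ ⊆ ℝ`) is an orthogonal
projection, `E` is multiplicative and countably additive (in the strong sense), `E ℝ = 1`,
each `E Δ` commutes with `T`, and on the range of `E Δ` the operator `T` has its
approximate point spectrum inside the closure of `Δ` (which uniquely characterizes the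
spectral measure of `T`). -/
structure IsSpectralMeasure {H : Type*} [NormedAddCommGroup H] [InnerProductSpace ℂ H]
    [CompleteSpace H] (T : H →L[ℂ] H) (E : Set ℝ → H →L[ℂ] H) : Prop where
  isSelfAdjoint : ∀ Δ : Set ℝ, MeasurableSet Δ → IsSelfAdjoint (E Δ)
  map_inter : ∀ Δ₁ Δ₂ : Set ℝ, MeasurableSet Δ₁ → MeasurableSet Δ₂ →
    E Δ₁ * E Δ₂ = E (Δ₁ ∩ Δ₂)
  map_univ : E Set.univ = 1
  countably_additive : ∀ Δ : ℕ → Set ℝ, (∀ n, MeasurableSet (Δ n)) →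
    Pairwise (Function.onFun Disjoint Δ) →
    ∀ x : H, HasSum (fun n => E (Δ n) x) (E (⋃ n, Δ n) x)
  commutes : ∀ Δ : Set ℝ, MeasurableSet Δ → Commute T (E Δ)
  spectrum_loc : ∀ Δ : Set ℝ, MeasurableSet Δ → ∀ x : H, E Δ x = x →
    ∀ μ : ℝ, Metric.infDist μ Δ * ‖x‖ ≤ ‖T x - (μ : ℂ) • x‖

open scoped Real

section Auxiliary

open MeasureTheory Set Filter Topology

lemma hasSum_coth_series {u : ℝ} (hu : 0 < u) :
    HasSum (fun n : ℕ => 2 * u / (u ^ 2 + ((n : ℝ) + 1) ^ 2))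
      (π * (1 + Real.exp (-(2 * π * u))) / (1 - Real.exp (-(2 * π * u))) - 1 / u) := by
  have hz : (Complex.I * u : ℂ) ∈ Complex.integerComplement := by
    rintro ⟨n, hn⟩
    have := congrArg Complex.im hn
    simp at this
    exact hu.ne this
  have hsum := (summable_cotTerm hz).hasSum
  have hval := cot_series_rep' hz
  have hexp : Complex.exp (2 * π * Complex.I * (Complex.I * u))
      = ((Real.exp (-(2 * π * u)) : ℝ) : ℂ) := by
    rw [Complex.ofReal_exp]
    congr 1
    push_cast
    linear_combination (2 * π * u : ℂ) * Complex.I_sq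
  have hlt : Real.exp (-(2 * π * u)) < 1 := by
    rw [Real.exp_lt_one_iff]
    have := Real.pi_pos
    nlinarith [mul_pos this hu]
  rw [Complex.cot_pi_eq_exp_ratio, hexp] at hval
  set e := Real.exp (-(2 * π * u))
  have he : (1 - e : ℂ) ≠ 0 := by
    have : (1 - e : ℝ) ≠ 0 := by linarith
    exact_mod_cast this
  have hu' : (u : ℂ) ≠ 0 := by exact_mod_cast hu.ne'
  have hval' : ∑' n : ℕ, cotTerm (Complex.I * u) n
      = π * ((e + 1) / (Complex.I * (1 - e))) - 1 / (Complex.I * u) := hval.symm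
  rw [hval'] at hsum
  have h2 := hsum.mul_left Complex.I
  have hterm : ∀ n : ℕ, Complex.I * cotTerm (Complex.I * u) n
      = ((2 * u / (u ^ 2 + ((n : ℝ) + 1) ^ 2) : ℝ) : ℂ) := by
    intro n
    have h1 : (u ^ 2 + ((n : ℂ) + 1) ^ 2) ≠ 0 := by
      have : (u ^ 2 + ((n : ℝ) + 1) ^ 2) ≠ 0 := by positivity
      exact_mod_cast this
    have h3 : (Complex.I * u - ((n : ℂ) + 1)) ≠ 0 := by
      intro h; have := congrArg Complex.im h; simp at this; exact hu.ne' this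
    have h4 : (Complex.I * u + ((n : ℂ) + 1)) ≠ 0 := by
      intro h; have := congrArg Complex.im h; simp at this; exact hu.ne' this
    push_cast
    simp only [cotTerm]
    field_simp
    linear_combination (2 * (u:ℂ) * (n + 1) ^ 2 ) * Complex.I_sq
  have hlim : Complex.I * (π * ((e + 1) / (Complex.I * (1 - e))) - 1 / (Complex.I * u))
      = ((π * (1 + e) / (1 - e) - 1 / u : ℝ) : ℂ) := by
    push_cast
    field_simp
    ring
  rw [hlim, funext hterm] at h2
  exact Complex.hasSum_ofReal.mp h2

/-- The partial fraction expansion of `tanh (π u / 2)`. -/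
lemma hasSum_tanh_series {u : ℝ} (hu : 0 < u) :
    HasSum (fun k : ℕ => 4 / π * (u / (u ^ 2 + (2 * (k : ℝ) + 1) ^ 2)))
      ((1 - Real.exp (-(π * u))) / (1 + Real.exp (-(π * u)))) := by
  have hall := (hasSum_coth_series hu).mul_left 2
  have heven := hasSum_coth_series (half_pos hu)
  have hπ := Real.pi_pos
  have hodd : Summable (fun k : ℕ => 2 * (2 * u / (u ^ 2 + (((2 * k : ℕ) : ℝ) + 1) ^ 2))) :=
    hall.summable.comp_injective (mul_right_injective₀ (two_ne_zero' ℕ))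
  have hodd' : HasSum (fun k : ℕ => 2 * (2 * u / (u ^ 2 + (((2 * k + 1 : ℕ) : ℝ) + 1) ^ 2)))
      (π * (1 + Real.exp (-(2 * π * (u / 2)))) / (1 - Real.exp (-(2 * π * (u / 2))))
        - 1 / (u / 2)) := by
    convert heven using 1
    ext k
    push_cast
    field_simp
    ring
  have huniq := (HasSum.even_add_odd (f := fun n : ℕ => 2 * (2 * u / (u ^ 2 + ((n : ℝ) + 1) ^ 2)))
    hodd.hasSum hodd').unique hall
  have key := hodd.hasSum.mul_left π⁻¹
  have hq : Real.exp (-(2 * π * (u / 2))) = Real.exp (-(π * u)) := by congr 1; ring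
  have hq2 : Real.exp (-(2 * π * u)) = Real.exp (-(π * u)) ^ 2 := by
    rw [← Real.exp_nat_mul]; congr 1; push_cast; ring
  rw [eq_sub_of_add_eq huniq, hq, hq2] at key
  have hlt : Real.exp (-(π * u)) < 1 := by
    rw [Real.exp_lt_one_iff]
    nlinarith [mul_pos hπ hu]
  have hpos := Real.exp_pos (-(π * u))
  set q := Real.exp (-(π * u))
  have hterm : ∀ k : ℕ, π⁻¹ * (2 * (2 * u / (u ^ 2 + (((2 * k : ℕ) : ℝ) + 1) ^ 2)))
      = 4 / π * (u / (u ^ 2 + (2 * (k : ℝ) + 1) ^ 2)) := by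
    intro k
    push_cast
    field_simp
    ring
  have hlim : π⁻¹ * (2 * (π * (1 + q ^ 2) / (1 - q ^ 2) - 1 / u)
      - (π * (1 + q) / (1 - q) - 1 / (u / 2))) = (1 - q) / (1 + q) := by
    have h1 : 1 - q ≠ 0 := by linarith
    have h2 : 1 + q ≠ 0 := by linarith
    rw [show 1 - q ^ 2 = (1 - q) * (1 + q) by ring]
    field_simp
    ring
  rwa [hlim, funext hterm] at key

/-- `∫₀^∞ cos (a t) e^{-ut} dt = u / (u² + a²)`. -/
lemma integral_cos_mul_exp_neg (a : ℝ) {u : ℝ} (hu : 0 < u) :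
    IntegrableOn (fun t : ℝ => Real.cos (a * t) * Real.exp (-(u * t))) (Ioi 0) ∧
    ∫ t in Ioi (0 : ℝ), Real.cos (a * t) * Real.exp (-(u * t)) = u / (u ^ 2 + a ^ 2) := by
  have hre : (-u + a * Complex.I : ℂ).re < 0 := by simp [hu]
  have hi := integrableOn_exp_mul_complex_Ioi hre 0
  have hv := integral_exp_mul_complex_Ioi hre 0
  have hpt : ∀ t : ℝ, (Complex.exp ((-u + a * Complex.I) * t)).re
      = Real.cos (a * t) * Real.exp (-(u * t)) := by
    intro t
    rw [Complex.exp_re]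
    simp [mul_comm]
  constructor
  · simpa only [RCLike.re_to_complex, hpt, IntegrableOn] using hi.re
  · have := integral_re hi
    simp only [RCLike.re_to_complex, hpt] at this
    rw [this, hv]
    have h0 : (-u + a * Complex.I : ℂ) ≠ 0 := fun h => by rw [h] at hre; simp at hre
    have : -Complex.exp ((-u + a * Complex.I) * (0 : ℝ)) / (-u + a * Complex.I)
        = ((u / (u ^ 2 + a ^ 2) : ℝ) : ℂ) + ((a / (u ^ 2 + a ^ 2) : ℝ) : ℂ) * Complex.I := by
      have h1 : ((u : ℂ) ^ 2 + (a : ℂ) ^ 2) ≠ 0 := by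
        have : u ^ 2 + a ^ 2 ≠ 0 := by positivity
        exact_mod_cast this
      push_cast
      simp only [mul_zero, Complex.exp_zero]
      field_simp
      linear_combination (-(a : ℂ) ^ 2) * Complex.I_sq
    rw [this, Complex.add_re, Complex.ofReal_re, Complex.re_ofReal_mul, Complex.I_re, mul_zero, add_zero]

lemma integral_sin_mul_sin_mul_exp_neg (a : ℝ) {u : ℝ} (hu : 0 < u) :
    IntegrableOn (fun t : ℝ => Real.sin (a * t) * Real.sin t * Real.exp (-(u * t))) (Ioi 0) ∧
    ∫ t in Ioi (0 : ℝ), Real.sin (a * t) * Real.sin t * Real.exp (-(u * t))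
      = (u / (u ^ 2 + (a - 1) ^ 2) - u / (u ^ 2 + (a + 1) ^ 2)) / 2 := by
  obtain ⟨i1, v1⟩ := integral_cos_mul_exp_neg (a - 1) hu
  obtain ⟨i2, v2⟩ := integral_cos_mul_exp_neg (a + 1) hu
  have hpt : ∀ t : ℝ, Real.sin (a * t) * Real.sin t * Real.exp (-(u * t))
      = (Real.cos ((a - 1) * t) * Real.exp (-(u * t))
        - Real.cos ((a + 1) * t) * Real.exp (-(u * t))) / 2 := by
    intro t
    rw [sub_mul, add_mul, one_mul, Real.cos_sub, Real.cos_add]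
    ring
  simp only [hpt]
  refine ⟨(i1.sub i2).div_const 2, ?_⟩
  rw [integral_div, integral_sub i1 i2, v1, v2]

/-- `∫₀^∞ |sin t| e^{-ut} dt = coth (π u / 2) / (1 + u²)`. -/
lemma integral_abs_sin_mul_exp_neg {u : ℝ} (hu : 0 < u) :
    IntegrableOn (fun t : ℝ => |Real.sin t| * Real.exp (-(u * t))) (Ioi 0) ∧
    (1 - Real.exp (-(π * u))) / (1 + Real.exp (-(π * u))) *
      ∫ t in Ioi (0 : ℝ), |Real.sin t| * Real.exp (-(u * t)) = (1 + u ^ 2)⁻¹ := by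
  have hπ := Real.pi_pos
  have hint : IntegrableOn (fun t : ℝ => |Real.sin t| * Real.exp (-(u * t))) (Ioi 0) := by
    have h0 := (integral_cos_mul_exp_neg 0 hu).1
    simp only [zero_mul, Real.cos_zero, one_mul] at h0
    refine h0.mono' (by fun_prop) (ae_of_all _ fun t => ?_)
    rw [norm_mul, Real.norm_eq_abs, abs_abs, Real.norm_eq_abs, abs_of_pos (Real.exp_pos _)]
    exact mul_le_of_le_one_left (Real.exp_pos _).le (Real.abs_sin_le_one t)
  refine ⟨hint, ?_⟩
  have hsplit : ∫ t in Ioi (0 : ℝ), |Real.sin t| * Real.exp (-(u * t))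
      = (∫ t in (0 : ℝ)..π, |Real.sin t| * Real.exp (-(u * t)))
        + ∫ t in Ioi π, |Real.sin t| * Real.exp (-(u * t)) := by
    rw [intervalIntegral.integral_of_le hπ.le, ← setIntegral_union _ measurableSet_Ioi
      (hint.mono_set Ioc_subset_Ioi_self) (hint.mono_set (Ioi_subset_Ioi hπ.le)),
      Ioc_union_Ioi_eq_Ioi hπ.le]
    exact Set.disjoint_left.mpr fun x hx hx' => not_lt.mpr hx.2 hx'
  have hshift : ∫ t in Ioi π, |Real.sin t| * Real.exp (-(u * t))
      = Real.exp (-(π * u)) * ∫ t in Ioi (0 : ℝ), |Real.sin t| * Real.exp (-(u * t)) := by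
    have := (measurePreserving_add_right volume π).setIntegral_preimage_emb
      (MeasurableEquiv.addRight π).measurableEmbedding
      (fun t => |Real.sin t| * Real.exp (-(u * t))) (Ioi π)
    rw [← this, ← integral_const_mul]
    have hpre : (fun x : ℝ => x + π) ⁻¹' Ioi π = Ioi 0 := by ext x; simp
    rw [hpre]
    congr 1
    ext t
    rw [Real.sin_add_pi, abs_neg, mul_left_comm, ← Real.exp_add]
    congr 2
    ring
  have hbase : ∫ t in (0 : ℝ)..π, |Real.sin t| * Real.exp (-(u * t))
      = (1 + Real.exp (-(π * u))) / (1 + u ^ 2) := by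
    have hd : ∀ t ∈ uIcc (0 : ℝ) π, HasDerivAt
        (fun t => -(Real.cos t + u * Real.sin t) * Real.exp (-(u * t)) / (1 + u ^ 2))
        (|Real.sin t| * Real.exp (-(u * t))) t := by
      intro t ht
      rw [uIcc_of_le hπ.le] at ht
      rw [abs_of_nonneg (Real.sin_nonneg_of_mem_Icc ht)]
      have h1 := (((Real.hasDerivAt_cos t).add ((Real.hasDerivAt_sin t).const_mul u)).neg.mul
        (((hasDerivAt_id t).const_mul u).neg.exp)).div_const (1 + u ^ 2)
      refine HasDerivAt.congr_deriv h1 ?_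
      have : 1 + u ^ 2 ≠ 0 := by positivity
      simp only [Pi.add_apply, Pi.neg_apply, id]
      field_simp
      ring
    rw [intervalIntegral.integral_eq_sub_of_hasDerivAt hd
      (Continuous.intervalIntegrable (by fun_prop) _ _)]
    simp [mul_comm u π]
    ring
  have hlt : Real.exp (-(π * u)) < 1 := by
    rw [Real.exp_lt_one_iff]
    nlinarith [mul_pos hπ hu]
  have hpos := Real.exp_pos (-(π * u))
  rw [hshift, hbase] at hsplit
  set q := Real.exp (-(π * u))
  set F := ∫ t in Ioi (0 : ℝ), |Real.sin t| * Real.exp (-(u * t))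
  have h2 : 1 + q ≠ 0 := by linarith
  have h3 : (1 - q) * F = (1 + q) / (1 + u ^ 2) := by linarith
  rw [div_mul_eq_mul_div, h3]
  field_simp

lemma hasDerivAt_mul_arctan_div (a : ℝ) {u : ℝ} (hu : 0 < u) :
    HasDerivAt (fun u : ℝ => a * Real.arctan (u / a)) (a ^ 2 / (u ^ 2 + a ^ 2)) u := by
  rcases eq_or_ne a 0 with rfl | ha
  · simpa using hasDerivAt_const u (0 : ℝ)
  · refine HasDerivAt.congr_deriv ((((hasDerivAt_id u).div_const a).arctan).const_mul a) ?_
    simp only [id]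
    have : u ^ 2 + a ^ 2 ≠ 0 := by positivity
    have : 1 + (u / a) ^ 2 ≠ 0 := by positivity
    field_simp
    ring

lemma tendsto_mul_arctan_div {a : ℝ} (ha : 0 ≤ a) :
    Tendsto (fun u : ℝ => a * Real.arctan (u / a)) atTop (𝓝 (a * (π / 2))) := by
  rcases ha.eq_or_lt with rfl | ha
  · simp
  · exact ((tendsto_nhds_of_tendsto_nhdsWithin Real.tendsto_arctan_atTop).comp
      (tendsto_id.atTop_div_const ha)).const_mul a

/-- `∫₀^∞ u² / ((u² + k²) (u² + a²)) du = π / (2 (k + a))`. -/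
lemma integral_sq_div_mul {k a : ℝ} (hk : 0 < k) (ha : 0 ≤ a) :
    IntegrableOn (fun u : ℝ => u / (u ^ 2 + k ^ 2) * (u / (u ^ 2 + a ^ 2))) (Ioi 0) ∧
    ∫ u in Ioi (0 : ℝ), u / (u ^ 2 + k ^ 2) * (u / (u ^ 2 + a ^ 2)) = π / (2 * (k + a)) := by
  obtain ⟨g, hc, hg, hl, hg0⟩ : ∃ g : ℝ → ℝ, Continuous g ∧
      (∀ u ∈ Ioi (0 : ℝ), HasDerivAt g (u / (u ^ 2 + k ^ 2) * (u / (u ^ 2 + a ^ 2))) u) ∧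
      Tendsto g atTop (𝓝 (π / (2 * (k + a)))) ∧ g 0 = 0 := by
    rcases eq_or_ne k a with rfl | hka
    · have hne : ∀ u : ℝ, u ^ 2 + k ^ 2 ≠ 0 := fun u => by positivity
      refine ⟨fun u => (k * Real.arctan (u / k) / k ^ 2 - u / (u ^ 2 + k ^ 2)) / 2, ?_, ?_, ?_, ?_⟩
      · exact (((by fun_prop : Continuous fun u : ℝ => k * Real.arctan (u / k) / k ^ 2)).sub
          (continuous_id.div (by fun_prop) hne)).div_const 2
      · intro u hu
        have h1 := ((hasDerivAt_mul_arctan_div k hu).div_const (k ^ 2))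
        have h2 := (hasDerivAt_id u).div (((hasDerivAt_id u).pow 2).add_const (k ^ 2)) (hne u)
        refine HasDerivAt.congr_deriv ((h1.sub h2).div_const 2) ?_
        have := hne u
        simp only [id, Pi.pow_apply]
        field_simp
        push_cast
        ring
      · have h1 := (tendsto_mul_arctan_div hk.le).div_const (k ^ 2)
        have h2 : Tendsto (fun u : ℝ => u / (u ^ 2 + k ^ 2)) atTop (𝓝 0) := by
          refine squeeze_zero' (g := fun u : ℝ => u⁻¹) ?_ ?_ tendsto_inv_atTop_zero
          · filter_upwards [eventually_gt_atTop 0] with u hu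
            positivity
          · filter_upwards [eventually_gt_atTop 0] with u hu
            rw [div_le_iff₀ (by positivity)]
            field_simp
            nlinarith [sq_nonneg k]
        have h3 := (h1.sub h2).div_const 2
        have e : (k * (π / 2) / k ^ 2 - 0) / 2 = π / (2 * (k + k)) := by
          field_simp
          ring
        rwa [e] at h3
      · simp
    · have hd : k ^ 2 - a ^ 2 ≠ 0 := by
        rw [show k ^ 2 - a ^ 2 = (k - a) * (k + a) by ring]
        exact mul_ne_zero (sub_ne_zero.mpr hka) (by positivity)
      refine ⟨fun u => (k * Real.arctan (u / k) - a * Real.arctan (u / a)) / (k ^ 2 - a ^ 2),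
        by fun_prop, ?_, ?_, by simp⟩
      · intro u hu
        refine HasDerivAt.congr_deriv (((hasDerivAt_mul_arctan_div k hu).sub
          (hasDerivAt_mul_arctan_div a hu)).div_const (k ^ 2 - a ^ 2)) ?_
        have hu' : 0 < u := hu
        have h1 : u ^ 2 + k ^ 2 ≠ 0 := by positivity
        have h2 : u ^ 2 + a ^ 2 ≠ 0 := by positivity
        field_simp
        ring
      · have h3 := ((tendsto_mul_arctan_div hk.le).sub
          (tendsto_mul_arctan_div ha)).div_const (k ^ 2 - a ^ 2)
        have hs : k + a ≠ 0 := by positivity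
        have e : (k * (π / 2) - a * (π / 2)) / (k ^ 2 - a ^ 2) = π / (2 * (k + a)) := by
          rw [div_eq_div_iff hd (by positivity)]
          ring
        rwa [e] at h3
  have hnn : ∀ u ∈ Ioi (0 : ℝ), 0 ≤ u / (u ^ 2 + k ^ 2) * (u / (u ^ 2 + a ^ 2)) := by
    intro u hu
    have hu' : 0 < u := hu
    positivity
  refine ⟨integrableOn_Ioi_deriv_of_nonneg hc.continuousWithinAt hg hnn hl, ?_⟩
  rw [integral_Ioi_of_hasDerivAt_of_nonneg hc.continuousWithinAt hg hnn hl, hg0, sub_zero]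

lemma hasSum_telescoping_inv {a : ℝ} (ha : 0 < a) :
    HasSum (fun k : ℕ => 1 / (2 * (k : ℝ) + a) - 1 / (2 * (k : ℝ) + 2 + a)) (1 / a) := by
  have hnn : ∀ k : ℕ, 0 ≤ 1 / (2 * (k : ℝ) + a) - 1 / (2 * (k : ℝ) + 2 + a) := by
    intro k
    rw [sub_nonneg]
    exact one_div_le_one_div_of_le (by positivity) (by linarith)
  rw [hasSum_iff_tendsto_nat_of_nonneg hnn]
  have hsum : ∀ n : ℕ, ∑ k ∈ Finset.range n,
      (1 / (2 * (k : ℝ) + a) - 1 / (2 * (k : ℝ) + 2 + a)) = 1 / a - 1 / (2 * (n : ℝ) + a) := by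
    intro n
    induction n with
    | zero => simp
    | succ n ih =>
      rw [Finset.sum_range_succ, ih]
      push_cast
      ring_nf
  simp only [hsum]
  have : Tendsto (fun n : ℕ => 1 / (2 * (n : ℝ) + a)) atTop (𝓝 0) := by
    simp only [one_div]
    exact (tendsto_atTop_add_const_right _ _
      (tendsto_natCast_atTop_atTop.const_mul_atTop two_pos)).inv_tendsto_atTop
  simpa using this.const_sub (1 / a)

lemma integral_tanh_mul_of_one_le {a : ℝ} (ha : 1 ≤ a) :
    ∫ u in Ioi (0 : ℝ), (1 - Real.exp (-(π * u))) / (1 + Real.exp (-(π * u))) *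
      ((u / (u ^ 2 + (a - 1) ^ 2) - u / (u ^ 2 + (a + 1) ^ 2)) / 2) = 1 / a := by
  have hπ := Real.pi_pos
  let F : ℕ → ℝ → ℝ := fun k u => 4 / π * (u / (u ^ 2 + (2 * (k : ℝ) + 1) ^ 2)) *
      ((u / (u ^ 2 + (a - 1) ^ 2) - u / (u ^ 2 + (a + 1) ^ 2)) / 2)
  have hF : ∀ k, IntegrableOn (F k) (Ioi 0) ∧
      ∫ u in Ioi (0 : ℝ), F k u = 1 / (2 * (k : ℝ) + a) - 1 / (2 * (k : ℝ) + 2 + a) := by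
    intro k
    have hk : (0 : ℝ) < 2 * k + 1 := by positivity
    obtain ⟨i1, v1⟩ := integral_sq_div_mul hk (sub_nonneg.mpr ha)
    obtain ⟨i2, v2⟩ := integral_sq_div_mul hk (by linarith : 0 ≤ a + 1)
    have e : F k = fun u => 2 / π * (u / (u ^ 2 + (2 * (k : ℝ) + 1) ^ 2) *
        (u / (u ^ 2 + (a - 1) ^ 2)) - u / (u ^ 2 + (2 * (k : ℝ) + 1) ^ 2) *
        (u / (u ^ 2 + (a + 1) ^ 2))) := by
      ext u
      simp only [F]
      ring
    rw [e]
    refine ⟨(i1.sub i2).const_mul _, ?_⟩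
    rw [integral_const_mul, integral_sub i1 i2, v1, v2]
    have h1 : 2 * (k : ℝ) + 1 + (a - 1) ≠ 0 := by positivity
    have h2 : 2 * (k : ℝ) + 1 + (a + 1) ≠ 0 := by positivity
    have h3 : 2 * (k : ℝ) + a ≠ 0 := by positivity
    have h4 : 2 * (k : ℝ) + 2 + a ≠ 0 := by positivity
    rw [show 2 * (k : ℝ) + 1 + (a - 1) = 2 * k + a by ring,
      show 2 * (k : ℝ) + 1 + (a + 1) = 2 * k + 2 + a by ring]
    field_simp
  have hnn : ∀ k, ∀ u ∈ Ioi (0 : ℝ), 0 ≤ F k u := by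
    intro k u hu
    have hu' : 0 < u := hu
    have : u / (u ^ 2 + (a + 1) ^ 2) ≤ u / (u ^ 2 + (a - 1) ^ 2) :=
      div_le_div_of_nonneg_left hu'.le (by positivity) (by nlinarith)
    have h2 : 0 ≤ u / (u ^ 2 + (a - 1) ^ 2) - u / (u ^ 2 + (a + 1) ^ 2) := by linarith
    simp only [F]
    positivity
  have hnorm : ∀ k, ∫ u in Ioi (0 : ℝ), ‖F k u‖ = ∫ u in Ioi (0 : ℝ), F k u := fun k =>
    setIntegral_congr_fun measurableSet_Ioi fun u hu => Real.norm_of_nonneg (hnn k u hu)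
  have htel := hasSum_telescoping_inv (lt_of_lt_of_le one_pos ha)
  have hS := hasSum_integral_of_summable_integral_norm (fun k => (hF k).1)
    (by simpa only [hnorm, (hF _).2] using htel.summable)
  simp only [(hF _).2] at hS
  rw [← hS.unique htel]
  refine setIntegral_congr_fun measurableSet_Ioi fun u hu => ?_
  exact ((hasSum_tanh_series hu).mul_right _).tsum_eq.symm

/-- The Fourier multiplier identity behind the sharp constant `π / 2`. -/
lemma integral_tanh_mul {a : ℝ} (ha : 1 ≤ |a|) :
    ∫ u in Ioi (0 : ℝ), (1 - Real.exp (-(π * u))) / (1 + Real.exp (-(π * u))) *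
      ((u / (u ^ 2 + (a - 1) ^ 2) - u / (u ^ 2 + (a + 1) ^ 2)) / 2) = 1 / a := by
  rcases le_abs.mp ha with h | h
  · exact integral_tanh_mul_of_one_le h
  · have := integral_tanh_mul_of_one_le h
    rw [← neg_neg (1 / a), ← one_div_neg_eq_neg_one_div, ← this, ← integral_neg]
    refine setIntegral_congr_fun measurableSet_Ioi fun u _ => ?_
    rw [show (-a - 1) ^ 2 = (a + 1) ^ 2 by ring, show (-a + 1) ^ 2 = (a - 1) ^ 2 by ring]
    ring

/-- **Bohr–Favard inequality** for generalized trigonometric polynomials whose frequencies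
have modulus at least `1`. -/
theorem norm_sum_le_of_trigPoly_deriv_le {ι : Type*} (s : Finset ι) (c : ι → ℂ) (l : ι → ℝ)
    (hl : ∀ i ∈ s, 1 ≤ |l i|) {S : ℝ}
    (hS : ∀ t : ℝ, ‖∑ i ∈ s, (l i : ℂ) * c i * Complex.exp (Complex.I * (l i * t))‖ ≤ S) :
    ‖∑ i ∈ s, c i‖ ≤ π / 2 * S := by
  have hsin : ∀ t : ℝ, ‖∑ i ∈ s, (l i : ℂ) * c i * (Real.sin (l i * t) : ℂ)‖ ≤ S := by
    intro t
    have e : ∑ i ∈ s, (l i : ℂ) * c i * (Real.sin (l i * t) : ℂ)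
        = (∑ i ∈ s, (l i : ℂ) * c i * Complex.exp (Complex.I * (l i * (-t : ℝ)))
          - ∑ i ∈ s, (l i : ℂ) * c i * Complex.exp (Complex.I * (l i * t))) * (Complex.I / 2) := by
      rw [← Finset.sum_sub_distrib, Finset.sum_mul]
      refine Finset.sum_congr rfl fun i _ => ?_
      rw [Complex.ofReal_sin, Complex.sin]
      push_cast
      rw [show Complex.I * (l i * -(t : ℂ)) = -(l i * t) * Complex.I by ring,
        show Complex.I * (l i * (t : ℂ)) = l i * t * Complex.I by ring]
      ring
    rw [e, norm_mul]
    have h1 := norm_sub_le (∑ i ∈ s, (l i : ℂ) * c i * Complex.exp (Complex.I * (l i * (-t : ℝ))))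
      (∑ i ∈ s, (l i : ℂ) * c i * Complex.exp (Complex.I * (l i * t)))
    have h2 := hS t
    have h3 := hS (-t)
    have h4 : ‖Complex.I / 2‖ = 1 / 2 := by simp
    rw [h4]
    linarith
  let G : ι → ℝ → ℝ := fun i u =>
    (u / (u ^ 2 + (l i - 1) ^ 2) - u / (u ^ 2 + (l i + 1) ^ 2)) / 2
  let w : ℝ → ℝ := fun u => (1 - Real.exp (-(π * u))) / (1 + Real.exp (-(π * u)))
  have hw : ∀ u, 0 < u → 0 ≤ w u := by
    intro u hu
    have hπ := Real.pi_pos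
    have hlt : Real.exp (-(π * u)) < 1 := by
      rw [Real.exp_lt_one_iff]
      nlinarith [mul_pos hπ hu]
    exact div_nonneg (by linarith) (by positivity)
  have hHbound : ∀ u ∈ Ioi (0 : ℝ),
      ‖∑ i ∈ s, (l i : ℂ) * c i * ((w u * G i u : ℝ) : ℂ)‖ ≤ S * (1 + u ^ 2)⁻¹ := by
    intro u hu
    obtain ⟨hF, hFv⟩ := integral_abs_sin_mul_exp_neg (u := u) hu
    have hH : ∑ i ∈ s, (l i : ℂ) * c i * ((G i u : ℝ) : ℂ)
        = ∫ t in Ioi (0 : ℝ), (∑ i ∈ s, (l i : ℂ) * c i * (Real.sin (l i * t) : ℂ)) *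
            ((Real.sin t * Real.exp (-(u * t)) : ℝ) : ℂ) := by
      simp only [Finset.sum_mul]
      rw [integral_finsetSum]
      · refine Finset.sum_congr rfl fun i _ => ?_
        obtain ⟨-, hv⟩ := integral_sin_mul_sin_mul_exp_neg (l i) (u := u) hu
        simp only [G]
        rw [← hv, ← integral_complex_ofReal, ← integral_const_mul]
        congr 1
        ext t
        simp only [Complex.ofReal_mul]
        ring
      · intro i _
        have h := ((integral_sin_mul_sin_mul_exp_neg (l i) (u := u) hu).1.ofReal
          (𝕜 := ℂ)).const_mul ((l i : ℂ) * c i)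
        refine h.congr (ae_of_all _ fun t => ?_)
        simp only [Complex.coe_algebraMap, RCLike.ofReal_mul, Complex.ofReal_mul]
        ring
    have hle : ‖∑ i ∈ s, (l i : ℂ) * c i * ((G i u : ℝ) : ℂ)‖
        ≤ S * ∫ t in Ioi (0 : ℝ), |Real.sin t| * Real.exp (-(u * t)) := by
      rw [hH, ← integral_const_mul]
      refine norm_integral_le_of_norm_le (hF.const_mul S) (ae_of_all _ fun t => ?_)
      rw [norm_mul, Complex.norm_real, norm_mul, Real.norm_eq_abs, Real.norm_eq_abs,
        abs_of_pos (Real.exp_pos _)]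
      exact mul_le_mul_of_nonneg_right (hsin t) (by positivity)
    have e : ∑ i ∈ s, (l i : ℂ) * c i * ((w u * G i u : ℝ) : ℂ)
        = (w u : ℂ) * ∑ i ∈ s, (l i : ℂ) * c i * ((G i u : ℝ) : ℂ) := by
      rw [Finset.mul_sum]
      refine Finset.sum_congr rfl fun i _ => ?_
      push_cast
      ring
    rw [e, norm_mul, Complex.norm_real, Real.norm_of_nonneg (hw u hu), ← hFv]
    calc _ ≤ w u * (S * ∫ t in Ioi (0 : ℝ), |Real.sin t| * Real.exp (-(u * t))) :=
          mul_le_mul_of_nonneg_left hle (hw u hu)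
      _ = _ := by simp only [w]; ring
  have hsum : ∑ i ∈ s, c i
      = ∫ u in Ioi (0 : ℝ), ∑ i ∈ s, (l i : ℂ) * c i * ((w u * G i u : ℝ) : ℂ) := by
    have hne : ∀ i ∈ s, l i ≠ 0 := fun i hi h => by
      have := hl i hi
      rw [h, abs_zero] at this
      linarith
    rw [integral_finsetSum]
    · refine Finset.sum_congr rfl fun i hi => ?_
      have hv := integral_tanh_mul (hl i hi)
      rw [integral_const_mul, integral_complex_ofReal]
      simp only [w, G]
      rw [hv]
      have : (l i : ℂ) ≠ 0 := by exact_mod_cast hne i hi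
      push_cast
      field_simp
    · intro i hi
      have hint : IntegrableOn (fun u => w u * G i u) (Ioi 0) := by
        refine Integrable.of_integral_ne_zero ?_
        simp only [w, G]
        rw [integral_tanh_mul (hl i hi)]
        exact one_div_ne_zero (hne i hi)
      exact hint.ofReal.const_mul _
  rw [hsum]
  calc _ ≤ ∫ u in Ioi (0 : ℝ), S * (1 + u ^ 2)⁻¹ :=
        norm_integral_le_of_norm_le (integrable_inv_one_add_sq.integrableOn.const_mul S)
          ((ae_restrict_iff' measurableSet_Ioi).mpr (ae_of_all _ hHbound))
    _ = π / 2 * S := by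
        rw [integral_const_mul, integral_Ioi_inv_one_add_sq]
        simp [mul_comm]

section SelfAdjoint

variable {H : Type*} [NormedAddCommGroup H] [InnerProductSpace ℂ H]

lemma norm_add_sq_of_inner_eq_zero {x y : H} (h : inner ℂ x y = 0) :
    ‖x + y‖ ^ 2 = ‖x‖ ^ 2 + ‖y‖ ^ 2 := by
  rw [@norm_add_sq ℂ, h]
  simp

lemma norm_sum_sq_of_pairwise_inner_eq_zero {ι : Type*} (s : Finset ι) (z : ι → H)
    (hz : ∀ i j, i ≠ j → inner ℂ (z i) (z j) = 0) :
    ‖∑ i ∈ s, z i‖ ^ 2 = ∑ i ∈ s, ‖z i‖ ^ 2 := by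
  classical
  induction s using Finset.induction_on with
  | empty => simp
  | insert a s ha ih =>
    rw [Finset.sum_insert ha, Finset.sum_insert ha, norm_add_sq_of_inner_eq_zero, ih]
    rw [inner_sum]
    exact Finset.sum_eq_zero fun i hi => hz a i (fun h => ha (h ▸ hi))

variable [CompleteSpace H]

lemma IsSelfAdjoint.inner_apply_left {S : H →L[ℂ] H} (hS : IsSelfAdjoint S) (x y : H) :
    inner ℂ (S x) y = inner ℂ x (S y) :=
  (ContinuousLinearMap.isSelfAdjoint_iff_isSymmetric.mp hS) x y

/-- A self-adjoint operator all of whose shifts by reals of modulus larger than `h` are bounded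
below has norm at most `h`. -/
lemma IsSelfAdjoint.norm_le_of_bounded_below {S : H →L[ℂ] H} (hS : IsSelfAdjoint S) {h : ℝ}
    (hh : 0 ≤ h) (hb : ∀ μ : ℝ, h ≤ |μ| → ∀ x, (|μ| - h) * ‖x‖ ≤ ‖S x - (μ : ℂ) • x‖) :
    ‖S‖ ≤ h := by
  by_contra! hlt
  set n := ‖S‖ with hn
  have hn0 : 0 < n := hh.trans_lt hlt
  have habs : |n| = n := abs_of_pos hn0
  set e := n - h with he
  have he0 : 0 < e := sub_pos.mpr hlt
  have hlow : ∀ x, e ^ 2 * ‖x‖ ≤ ‖S (S x) - ((n ^ 2 : ℝ) : ℂ) • x‖ := by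
    intro x
    have h1 := hb n (by rw [habs]; exact hlt.le) (S x - ((-n : ℝ) : ℂ) • x)
    have h2 := hb (-n) (by rw [abs_neg, habs]; exact hlt.le) x
    rw [abs_neg] at h2
    rw [habs] at h1 h2
    have e1 : S (S x - ((-n : ℝ) : ℂ) • x) - (n : ℂ) • (S x - ((-n : ℝ) : ℂ) • x)
        = S (S x) - ((n ^ 2 : ℝ) : ℂ) • x := by
      rw [map_sub, map_smul]
      push_cast
      module
    rw [e1] at h1
    nlinarith [mul_le_mul_of_nonneg_left h2 he0.le]
  have hup : ∀ x, ‖S (S x) - ((n ^ 2 : ℝ) : ℂ) • x‖ ^ 2 ≤ n ^ 2 * (n ^ 2 * ‖x‖ ^ 2 - ‖S x‖ ^ 2) := by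
    intro x
    have h1 : ‖S (S x)‖ ≤ n * ‖S x‖ := S.le_opNorm _
    have h2 : ‖S (S x)‖ ^ 2 ≤ n ^ 2 * ‖S x‖ ^ 2 := by
      rw [← mul_pow]; gcongr
    rw [@norm_sub_sq ℂ, inner_smul_right, hS.inner_apply_left, norm_smul]
    have h3 : RCLike.re (((n ^ 2 : ℝ) : ℂ) * inner ℂ (S x) (S x)) = n ^ 2 * ‖S x‖ ^ 2 := by
      rw [inner_self_eq_norm_sq_to_K]
      change (((n ^ 2 : ℝ) : ℂ) * ((‖S x‖ : ℝ) : ℂ) ^ 2).re = _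
      rw [← Complex.ofReal_pow, ← Complex.ofReal_mul, Complex.ofReal_re]
    rw [h3, Complex.norm_real, Real.norm_of_nonneg (by positivity)]
    nlinarith
  have hbound : ∀ x, ‖S x‖ ^ 2 ≤ (n ^ 2 - e ^ 4 / n ^ 2) * ‖x‖ ^ 2 := by
    intro x
    have h1 := hup x
    have h2 : (e ^ 2 * ‖x‖) ^ 2 ≤ ‖S (S x) - ((n ^ 2 : ℝ) : ℂ) • x‖ ^ 2 := by
      have := hlow x
      gcongr
    have h3 : e ^ 4 / n ^ 2 * ‖x‖ ^ 2 = (e ^ 2 * ‖x‖) ^ 2 / n ^ 2 := by ring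
    have h4 : (e ^ 2 * ‖x‖) ^ 2 / n ^ 2 ≤ n ^ 2 * ‖x‖ ^ 2 - ‖S x‖ ^ 2 := by
      rw [div_le_iff₀ (by positivity)]
      linarith
    linarith
  have hsmall : n ≤ Real.sqrt (n ^ 2 - e ^ 4 / n ^ 2) := by
    refine S.opNorm_le_bound (Real.sqrt_nonneg _) fun x => ?_
    have hx := hbound x
    rcases (norm_nonneg x).eq_or_lt with h0 | h0
    · rw [norm_eq_zero.mp h0.symm]; simp
    · have hc : 0 ≤ n ^ 2 - e ^ 4 / n ^ 2 := by
        by_contra! hneg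
        nlinarith [mul_neg_of_neg_of_pos hneg (pow_pos h0 2), sq_nonneg ‖S x‖]
      refine le_of_sq_le_sq ?_ (by positivity)
      rw [mul_pow, Real.sq_sqrt hc]
      exact hx
  have : n ^ 2 ≤ n ^ 2 - e ^ 4 / n ^ 2 := by
    rcases le_total 0 (n ^ 2 - e ^ 4 / n ^ 2) with hc | hc
    · calc n ^ 2 ≤ Real.sqrt (n ^ 2 - e ^ 4 / n ^ 2) ^ 2 := by gcongr
        _ = _ := Real.sq_sqrt hc
    · rw [Real.sqrt_eq_zero_of_nonpos hc] at hsmall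
      linarith
  have hpos : 0 < e ^ 4 / n ^ 2 := by positivity
  linarith

/-- For a finite orthogonal family of projections, `∑ ‖P i x‖² ≤ ‖x‖²`. -/
lemma sum_norm_sq_le_of_orthogonal {ι : Type*} (s : Finset ι) (P : ι → H →L[ℂ] H)
    (hsa : ∀ i, IsSelfAdjoint (P i)) (hid : ∀ i, P i * P i = P i)
    (horth : ∀ i j, i ≠ j → P i * P j = 0) (x : H) :
    ∑ i ∈ s, ‖P i x‖ ^ 2 ≤ ‖x‖ ^ 2 := by
  have hz : ∀ i j, i ≠ j → inner ℂ (P i x) (P j x) = 0 := by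
    intro i j hij
    rw [(hsa i).inner_apply_left, ← mul_apply_eq_comp, horth i j hij]
    simp
  have h1 := norm_sum_sq_of_pairwise_inner_eq_zero s (fun i => P i x) hz
  have h2 : inner ℂ (∑ i ∈ s, P i x) x = ((∑ i ∈ s, ‖P i x‖ ^ 2 : ℝ) : ℂ) := by
    rw [sum_inner]
    push_cast
    refine Finset.sum_congr rfl fun i _ => ?_
    conv_lhs => rw [← hid i, mul_apply_eq_comp, (hsa i).inner_apply_left]
    rw [inner_self_eq_norm_sq_to_K]
    rfl
  have h3 : ∑ i ∈ s, ‖P i x‖ ^ 2 ≤ ‖∑ i ∈ s, P i x‖ * ‖x‖ := by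
    have := norm_inner_le_norm (𝕜 := ℂ) (∑ i ∈ s, P i x) x
    rw [h2, Complex.norm_real] at this
    exact (le_abs_self _).trans this
  rw [← h1] at h3 ⊢
  nlinarith [sq_nonneg (‖∑ i ∈ s, P i x‖ - ‖x‖)]

lemma norm_sum_smul_le_of_orthogonal {ι : Type*} (s : Finset ι) (P : ι → H →L[ℂ] H)
    (hsa : ∀ i, IsSelfAdjoint (P i)) (hid : ∀ i, P i * P i = P i)
    (horth : ∀ i j, i ≠ j → P i * P j = 0) (a : ι → ℂ) (ha : ∀ i, ‖a i‖ ≤ 1) :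
    ‖∑ i ∈ s, a i • P i‖ ≤ 1 := by
  refine ContinuousLinearMap.opNorm_le_bound _ zero_le_one fun x => ?_
  rw [one_mul]
  refine le_of_sq_le_sq ?_ (norm_nonneg x)
  simp only [sum_apply, smul_apply]
  rw [norm_sum_sq_of_pairwise_inner_eq_zero]
  · refine le_trans (Finset.sum_le_sum fun i _ => ?_) (sum_norm_sq_le_of_orthogonal s P hsa hid horth x)
    rw [norm_smul]
    have := mul_le_of_le_one_left (norm_nonneg (P i x)) (ha i)
    gcongr
  · intro i j hij
    rw [inner_smul_left, inner_smul_right, (hsa i).inner_apply_left,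
      ← mul_apply_eq_comp, horth i j hij]
    simp

end SelfAdjoint

namespace IsSpectralMeasure

variable {H : Type*} [NormedAddCommGroup H] [InnerProductSpace ℂ H] [CompleteSpace H]
  {T : H →L[ℂ] H} {E : Set ℝ → H →L[ℂ] H}

lemma mul_self (hE : IsSpectralMeasure T E) {Δ : Set ℝ} (hΔ : MeasurableSet Δ) :
    E Δ * E Δ = E Δ := by
  rw [hE.map_inter Δ Δ hΔ hΔ, inter_self]

lemma apply_apply (hE : IsSpectralMeasure T E) {Δ : Set ℝ} (hΔ : MeasurableSet Δ) (x : H) :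
    E Δ (E Δ x) = E Δ x := by
  rw [← mul_apply_eq_comp, hE.mul_self hΔ]

lemma map_empty (hE : IsSpectralMeasure T E) : E ∅ = 0 := by
  ext x
  have h := hE.countably_additive (fun _ => ∅) (fun _ => MeasurableSet.empty)
    (fun _ _ _ => disjoint_bot_left) x
  simpa using (summable_const_iff (β := ℕ) _).mp h.summable

lemma map_union (hE : IsSpectralMeasure T E) {Δ₁ Δ₂ : Set ℝ} (h₁ : MeasurableSet Δ₁)
    (h₂ : MeasurableSet Δ₂) (hd : Disjoint Δ₁ Δ₂) : E (Δ₁ ∪ Δ₂) = E Δ₁ + E Δ₂ := by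
  ext x
  let D : ℕ → Set ℝ := fun n => if n = 0 then Δ₁ else if n = 1 then Δ₂ else ∅
  have hD : ∀ n, MeasurableSet (D n) := by
    intro n
    simp only [D]
    split_ifs <;> first | assumption | exact MeasurableSet.empty
  have hpair : Pairwise (Function.onFun Disjoint D) := by
    intro i j hij
    simp only [D, Function.onFun]
    split_ifs <;> first | omega | exact hd | exact hd.symm | simp
  have hU : ⋃ n, D n = Δ₁ ∪ Δ₂ := by
    ext s
    simp only [mem_iUnion, mem_union, D]
    constructor
    · rintro ⟨n, hn⟩
      split_ifs at hn
      · exact Or.inl hn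
      · exact Or.inr hn
      · exact hn.elim
    · rintro (h | h)
      · exact ⟨0, by simpa using h⟩
      · exact ⟨1, by simpa using h⟩
  have h := hE.countably_additive D hD hpair x
  rw [hU] at h
  have h' : HasSum (fun n => E (D n) x) (∑ n ∈ Finset.range 2, E (D n) x) := by
    refine hasSum_sum_of_ne_finset_zero fun n hn => ?_
    have hn2 : 2 ≤ n := by rwa [Finset.mem_range, not_lt] at hn
    have : D n = ∅ := by
      simp only [D]
      rw [if_neg (by omega), if_neg (by omega)]
    rw [this, hE.map_empty]
    rfl
  rw [h.unique h']
  simp [Finset.sum_range_succ, D]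

lemma mul_eq_zero_of_disjoint (hE : IsSpectralMeasure T E) {Δ₁ Δ₂ : Set ℝ}
    (h₁ : MeasurableSet Δ₁) (h₂ : MeasurableSet Δ₂) (hd : Disjoint Δ₁ Δ₂) :
    E Δ₁ * E Δ₂ = 0 := by
  rw [hE.map_inter _ _ h₁ h₂, hd.inter_eq, hE.map_empty]

lemma map_biUnion_finset (hE : IsSpectralMeasure T E) {ι : Type*} (s : Finset ι)
    (D : ι → Set ℝ) (hD : ∀ i, MeasurableSet (D i))
    (hd : Pairwise (Function.onFun Disjoint D)) :
    E (⋃ i ∈ s, D i) = ∑ i ∈ s, E (D i) := by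
  classical
  induction s using Finset.induction_on with
  | empty => simp [hE.map_empty]
  | insert a s ha ih =>
    rw [Finset.sum_insert ha, Finset.set_biUnion_insert,
      hE.map_union (hD a) (s.measurableSet_biUnion fun i _ => hD i), ih]
    simp only [disjoint_iUnion_right]
    exact fun i hi => hd fun h => ha (h ▸ hi)

lemma map_compl (hE : IsSpectralMeasure T E) {Δ : Set ℝ} (hΔ : MeasurableSet Δ) :
    E Δᶜ = 1 - E Δ := by
  have := hE.map_union hΔ hΔ.compl disjoint_compl_right
  rw [union_compl_self, hE.map_univ] at this
  rw [this]
  abel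

lemma apply_eq_of_subset (hE : IsSpectralMeasure T E) {Δ₁ Δ₂ : Set ℝ}
    (h₁ : MeasurableSet Δ₁) (h₂ : MeasurableSet Δ₂) (hs : Δ₁ ⊆ Δ₂) {x : H}
    (hx : E Δ₁ x = x) : E Δ₂ x = x := by
  conv_lhs => rw [← hx, ← mul_apply_eq_comp, hE.map_inter _ _ h₂ h₁,
    inter_eq_self_of_subset_right hs]
  exact hx

lemma eq_zero_of_subset (hE : IsSpectralMeasure T E) {Δ₁ Δ₂ : Set ℝ}
    (h₁ : MeasurableSet Δ₁) (h₂ : MeasurableSet Δ₂) (hs : Δ₁ ⊆ Δ₂) (hz : E Δ₂ = 0) :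
    E Δ₁ = 0 := by
  rw [← inter_eq_self_of_subset_right hs, ← hE.map_inter _ _ h₂ h₁, hz, zero_mul]

lemma norm_sq_eq (hE : IsSpectralMeasure T E) {Δ : Set ℝ} (hΔ : MeasurableSet Δ) (x : H) :
    ‖x‖ ^ 2 = ‖E Δ x‖ ^ 2 + ‖x - E Δ x‖ ^ 2 := by
  rw [← norm_add_sq_of_inner_eq_zero, add_sub_cancel]
  rw [(hE.isSelfAdjoint Δ hΔ).inner_apply_left, map_sub, hE.apply_apply hΔ, sub_self,
    inner_zero_right]

lemma norm_apply_le (hE : IsSpectralMeasure T E) {Δ : Set ℝ} (hΔ : MeasurableSet Δ) (x : H) :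
    ‖E Δ x‖ ≤ ‖x‖ := by
  refine le_of_sq_le_sq ?_ (norm_nonneg x)
  linarith [hE.norm_sq_eq hΔ x, sq_nonneg ‖x - E Δ x‖]

lemma norm_le_one (hE : IsSpectralMeasure T E) {Δ : Set ℝ} (hΔ : MeasurableSet Δ) :
    ‖E Δ‖ ≤ 1 :=
  (E Δ).opNorm_le_bound zero_le_one fun x => by rw [one_mul]; exact hE.norm_apply_le hΔ x

lemma map_commute_apply (hE : IsSpectralMeasure T E) {Δ : Set ℝ} (hΔ : MeasurableSet Δ) (x : H) :
    T (E Δ x) = E Δ (T x) :=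
  DFunLike.congr_fun (hE.commutes Δ hΔ).eq x

/-- On the range of `E Δ` with `Δ ⊆ [c - h, c + h]`, the operator `T` differs from the scalar `c`
by at most `h`. -/
lemma norm_sub_smul_le (hE : IsSpectralMeasure T E) (hT : IsSelfAdjoint T) {Δ : Set ℝ}
    (hΔ : MeasurableSet Δ) {c h : ℝ} (hh : 0 ≤ h) (hs : ∀ s ∈ Δ, |s - c| ≤ h) {x : H}
    (hx : E Δ x = x) : ‖T x - (c : ℂ) • x‖ ≤ h * ‖x‖ := by
  rcases Δ.eq_empty_or_nonempty with rfl | hne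
  · rw [hE.map_empty] at hx
    rw [← hx]
    simp
  set S : H →L[ℂ] H := (T - (c : ℂ) • (1 : H →L[ℂ] H)) * E Δ with hS
  have hSx : ∀ y, S y = T (E Δ y) - (c : ℂ) • E Δ y := fun y => by simp [hS]
  have hSsa : IsSelfAdjoint S := by
    have h1 : IsSelfAdjoint (T - (c : ℂ) • (1 : H →L[ℂ] H)) :=
      hT.sub (IsSelfAdjoint.smul (Complex.conj_ofReal c) (IsSelfAdjoint.one _))
    rw [hS, h1.commute_iff (hE.isSelfAdjoint Δ hΔ) |>.symm]
    exact (hE.commutes Δ hΔ).sub_left ((Commute.one_left _).smul_left _)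
  have key : ‖S‖ ≤ h := by
    refine hSsa.norm_le_of_bounded_below hh fun μ hμ y => ?_
    set u := E Δ y with hu
    have huu : E Δ u = u := hE.apply_apply hΔ y
    have h1 := hE.spectrum_loc Δ hΔ u huu (c + μ)
    have hinf : |μ| - h ≤ Metric.infDist (c + μ) Δ := by
      refine (Metric.le_infDist hne).mpr fun s hsΔ => ?_
      rw [Real.dist_eq]
      have := hs s hsΔ
      have h2 : |μ| ≤ |c + μ - s| + |s - c| := by
        have := abs_add_le (c + μ - s) (s - c)
        rwa [show c + μ - s + (s - c) = μ by ring] at this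
      linarith
    have h2 : S y - (μ : ℂ) • y
        = (T u - ((c + μ : ℝ) : ℂ) • u) + (-(μ : ℂ)) • (y - u) := by
      rw [hSx]
      push_cast
      module
    have h3 : inner ℂ (T u - ((c + μ : ℝ) : ℂ) • u) ((-(μ : ℂ)) • (y - u)) = 0 := by
      have : T u - ((c + μ : ℝ) : ℂ) • u = E Δ (T u - ((c + μ : ℝ) : ℂ) • u) := by
        rw [map_sub, map_smul, ← hE.map_commute_apply hΔ, huu]
      rw [this, (hE.isSelfAdjoint Δ hΔ).inner_apply_left, map_smul, map_sub, huu, ← hu, sub_self,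
        smul_zero, inner_zero_right]
    have h4 : 0 ≤ |μ| - h := sub_nonneg.mpr hμ
    refine le_of_sq_le_sq ?_ (norm_nonneg _)
    rw [h2, norm_add_sq_of_inner_eq_zero h3, mul_pow, hE.norm_sq_eq hΔ y, ← hu, norm_smul,
      norm_neg, Complex.norm_real, Real.norm_eq_abs, mul_add, ← mul_pow, ← mul_pow]
    have h5 : (|μ| - h) * ‖u‖ ≤ ‖T u - ((c + μ : ℝ) : ℂ) • u‖ :=
      (mul_le_mul_of_nonneg_right hinf (norm_nonneg _)).trans h1
    have h6 : |μ| - h ≤ |μ| := by linarith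
    gcongr
  have := S.le_of_opNorm_le key x
  rwa [hSx, hx] at this

/-- If `T - l` is bounded below by `c`, then `E` vanishes on subsets of the ball of radius `c / 2`
around `l`. -/
lemma eq_zero_of_bounded_below (hE : IsSpectralMeasure T E) (hT : IsSelfAdjoint T) {l c : ℝ}
    (hc : 0 < c) (hb : ∀ x, c * ‖x‖ ≤ ‖T x - (l : ℂ) • x‖) :
    E (Metric.ball l (c / 2)) = 0 := by
  ext x
  set y := E (Metric.ball l (c / 2)) x with hy
  have h1 := hE.norm_sub_smul_le hT measurableSet_ball (c := l) (h := c / 2) (by positivity)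
    (fun s hs => (Metric.mem_ball.mp hs).le) (hE.apply_apply measurableSet_ball x)
  have h2 := hb y
  have : ‖y‖ = 0 := by
    have := norm_nonneg y
    rw [← hy] at h1
    nlinarith
  simpa using this

/-- A measurable set each of whose points is the centre of a null ball is null. -/
lemma eq_zero_of_locally_null (hE : IsSpectralMeasure T E) {U : Set ℝ} (hU : MeasurableSet U)
    (hloc : ∀ l ∈ U, ∃ c > 0, E (Metric.ball l c) = 0) : E U = 0 := by
  choose! c hc0 hc using hloc
  obtain ⟨t, htU, htc, hcov⟩ := TopologicalSpace.countable_cover_nhdsWithin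
    (s := U) (f := fun l => Metric.ball l (c l))
    fun l hl => mem_nhdsWithin_of_mem_nhds (Metric.ball_mem_nhds l (hc0 l hl))
  rcases t.eq_empty_or_nonempty with rfl | hne
  · have : U = ∅ := by simpa using hcov
    rw [this, hE.map_empty]
  obtain ⟨g, hg⟩ := htc.exists_eq_range hne
  let D : ℕ → Set ℝ := fun n => U ∩ Metric.ball (g n) (c (g n))
  have hD : ∀ n, MeasurableSet (D n) := fun n => hU.inter measurableSet_ball
  have hDU : ⋃ n, D n = U := by
    rw [← inter_iUnion]
    refine inter_eq_self_of_subset_left (hcov.trans ?_)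
    rw [hg, biUnion_range]
  have hnull : ∀ n, E (disjointed D n) = 0 := fun n =>
    hE.eq_zero_of_subset (MeasurableSet.disjointed hD n) measurableSet_ball
      ((disjointed_subset D n).trans inter_subset_right)
      (hc _ (htU (hg ▸ mem_range_self n)))
  ext x
  have h := hE.countably_additive (disjointed D) (MeasurableSet.disjointed hD)
    (disjoint_disjointed D) x
  rw [iUnion_disjointed, hDU] at h
  simp only [hnull] at h
  exact h.unique (by simp)

end IsSpectralMeasure

section Sylvester

variable {H : Type*} [NormedAddCommGroup H] [InnerProductSpace ℂ H] [CompleteSpace H]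

/-- Bound for the solution of the Sylvester equation with diagonal coefficients whose spectra are
separated by `D`. -/
theorem norm_le_of_diagonal_sylvester {ι κ : Type*} (J : Finset ι) (K : Finset κ)
    (P : ι → H →L[ℂ] H) (Q : κ → H →L[ℂ] H)
    (hPsa : ∀ i, IsSelfAdjoint (P i)) (hPid : ∀ i, P i * P i = P i)
    (hPorth : ∀ i j, i ≠ j → P i * P j = 0)
    (hQsa : ∀ i, IsSelfAdjoint (Q i)) (hQid : ∀ i, Q i * Q i = Q i)
    (hQorth : ∀ i j, i ≠ j → Q i * Q j = 0)
    (a : ι → ℝ) (b : κ → ℝ) {D : ℝ} (hD : 0 < D)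
    (hsep : ∀ i ∈ J, ∀ k ∈ K, D ≤ |a i - b k|) (X : H →L[ℂ] H)
    (hX : (∑ i ∈ J, P i) * X * (∑ k ∈ K, Q k) = X) :
    ‖X‖ ≤ π / 2 * (‖(∑ i ∈ J, (a i : ℂ) • P i) * X - X * (∑ k ∈ K, (b k : ℂ) • Q k)‖ / D) := by
  classical
  set Y := (∑ i ∈ J, (a i : ℂ) • P i) * X - X * (∑ k ∈ K, (b k : ℂ) • Q k) with hY
  have hPsum : ∀ i ∈ J, P i * (∑ j ∈ J, (a j : ℂ) • P j) = (a i : ℂ) • P i := by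
    intro i hi
    rw [Finset.mul_sum, Finset.sum_eq_single_of_mem i hi, mul_smul_comm, hPid]
    intro j _ hj
    rw [mul_smul_comm, hPorth i j hj.symm, smul_zero]
  have hQsum : ∀ k ∈ K, (∑ j ∈ K, (b j : ℂ) • Q j) * Q k = (b k : ℂ) • Q k := by
    intro k hk
    rw [Finset.sum_mul, Finset.sum_eq_single_of_mem k hk, smul_mul_assoc, hQid]
    intro j _ hj
    rw [smul_mul_assoc, hQorth j k hj, smul_zero]
  have hPYQ : ∀ i ∈ J, ∀ k ∈ K,
      P i * Y * Q k = ((a i - b k : ℝ) : ℂ) • (P i * X * Q k) := by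
    intro i hi k hk
    rw [hY, mul_sub, sub_mul, ← mul_assoc, hPsum i hi, mul_assoc (P i) (X * _), mul_assoc X,
      hQsum k hk]
    simp only [smul_mul_assoc, mul_smul_comm, Complex.ofReal_sub, sub_smul, mul_assoc]
  refine X.opNorm_le_bound (by positivity) fun y => ?_
  set z := X y with hz
  have key := norm_sum_le_of_trigPoly_deriv_le (J ×ˢ K)
    (fun p => inner ℂ z ((P p.1 * X * Q p.2) y)) (fun p => (a p.1 - b p.2) / D)
    (fun p hp => by
      rw [Finset.mem_product] at hp
      rw [abs_div, abs_of_pos hD, le_div_iff₀ hD, one_mul]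
      exact hsep _ hp.1 _ hp.2)
    (S := ‖z‖ * (‖Y‖ * ‖y‖) / D) ?_
  · have hsum : ∑ p ∈ J ×ˢ K, inner ℂ z ((P p.1 * X * Q p.2) y) = inner ℂ z z := by
      have hz' : z = ((∑ i ∈ J, P i) * X * ∑ k ∈ K, Q k) y := by rw [hX]
      conv_rhs => arg 3; rw [hz']
      rw [Finset.sum_product]
      simp only [Finset.sum_mul, Finset.mul_sum, sum_apply, inner_sum]
      rw [Finset.sum_comm]
    rw [hsum, inner_self_eq_norm_sq_to_K, norm_pow] at key
    simp only [RCLike.norm_ofReal, abs_norm] at key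
    rcases (norm_nonneg z).eq_or_lt with h0 | h0
    · rw [← h0]
      positivity
    · refine le_of_mul_le_mul_left ?_ h0
      calc ‖z‖ * ‖z‖ = ‖z‖ ^ 2 := by ring
        _ ≤ _ := key
        _ = _ := by ring
  · intro t
    set U : H →L[ℂ] H := ∑ i ∈ J, Complex.exp ((a i * (t / D) : ℝ) * Complex.I) • P i with hU
    set W : H →L[ℂ] H := ∑ k ∈ K, Complex.exp ((-b k * (t / D) : ℝ) * Complex.I) • Q k with hW
    have hU1 : ‖U‖ ≤ 1 := norm_sum_smul_le_of_orthogonal J P hPsa hPid hPorth _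
      fun i => (Complex.norm_exp_ofReal_mul_I _).le
    have hW1 : ‖W‖ ≤ 1 := norm_sum_smul_le_of_orthogonal K Q hQsa hQid hQorth _
      fun i => (Complex.norm_exp_ofReal_mul_I _).le
    have hsum : ∑ p ∈ J ×ˢ K, (((a p.1 - b p.2) / D : ℝ) : ℂ)
        * inner ℂ z ((P p.1 * X * Q p.2) y)
        * Complex.exp (Complex.I * (((a p.1 - b p.2) / D : ℝ) * t))
        = (D : ℂ)⁻¹ * inner ℂ z ((U * Y * W) y) := by
      rw [hU, hW, Finset.sum_product]
      simp only [Finset.sum_mul, Finset.mul_sum, sum_apply, inner_sum]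
      rw [Finset.sum_comm]
      refine Finset.sum_congr rfl fun k hk => Finset.sum_congr rfl fun i hi => ?_
      rw [smul_mul_assoc, smul_mul_assoc, mul_smul_comm, hPYQ i hi k hk]
      simp only [smul_apply, inner_smul_right]
      have he : Complex.exp (Complex.I * (((a i - b k) / D : ℝ) * t))
          = Complex.exp ((a i * (t / D) : ℝ) * Complex.I)
            * Complex.exp ((-b k * (t / D) : ℝ) * Complex.I) := by
        rw [← Complex.exp_add]
        congr 1
        push_cast
        ring
      rw [he, Complex.ofReal_div]
      ring
    rw [hsum, norm_mul, norm_inv, Complex.norm_real, Real.norm_of_nonneg hD.le, div_eq_inv_mul]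
    gcongr
    refine (norm_inner_le_norm _ _).trans ?_
    gcongr
    calc ‖(U * Y * W) y‖ = ‖U (Y (W y))‖ := rfl
      _ ≤ 1 * ‖Y (W y)‖ := U.le_of_opNorm_le hU1 _
      _ ≤ 1 * (‖Y‖ * (1 * ‖y‖)) := by
        gcongr
        exact Y.le_opNorm_of_le (W.le_of_opNorm_le hW1 _)
      _ = ‖Y‖ * ‖y‖ := by ring

end Sylvester

namespace IsSpectralMeasure

variable {H : Type*} [NormedAddCommGroup H] [InnerProductSpace ℂ H] [CompleteSpace H]

/-- On a bounded set, `T` is approximated by a finite combination of spectral projections. -/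
lemma exists_diagonal_approx {T : H →L[ℂ] H} {E : Set ℝ → H →L[ℂ] H}
    (hE : IsSpectralMeasure T E) (hT : IsSelfAdjoint T) {S : Set ℝ} (hS : MeasurableSet S)
    (hSb : Bornology.IsBounded S) {h : ℝ} (hh : 0 < h) :
    ∃ (J : Finset ℤ) (P : ℤ → H →L[ℂ] H) (a : ℤ → ℝ), (∀ j, IsSelfAdjoint (P j)) ∧
      (∀ j, P j * P j = P j) ∧ (∀ i j, i ≠ j → P i * P j = 0) ∧ ∑ j ∈ J, P j = E S ∧
      (∀ j ∈ J, a j ∈ S) ∧ ‖T * E S - ∑ j ∈ J, (a j : ℂ) • P j‖ ≤ h := by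
  classical
  let f : ℝ → ℤ := fun s => ⌊s / h⌋
  have hf : Measurable f := Int.measurable_floor.comp (measurable_id.div_const h)
  have hfin : (f '' S).Finite := by
    obtain ⟨R, hR⟩ := hSb.subset_closedBall 0
    refine (Set.finite_Icc ⌊-R / h⌋ ⌊R / h⌋).subset ?_
    rintro _ ⟨s, hs, rfl⟩
    have h1 := hR hs
    rw [Real.closedBall_eq_Icc, zero_sub, zero_add] at h1
    exact ⟨Int.floor_mono (by gcongr; exact h1.1), Int.floor_mono (by gcongr; exact h1.2)⟩
  let D : ℤ → Set ℝ := fun j => S ∩ f ⁻¹' {j}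
  have hD : ∀ j, MeasurableSet (D j) := fun j => hS.inter (hf (measurableSet_singleton j))
  have hDd : Pairwise (Function.onFun Disjoint D) := fun i j hij =>
    ((disjoint_singleton.mpr hij).preimage f).mono inter_subset_right inter_subset_right
  have hU : ⋃ j ∈ hfin.toFinset, D j = S := by
    ext s
    simpa [D] using fun hs => ⟨s, hs, rfl⟩
  have hne : ∀ j ∈ hfin.toFinset, ∃ s, s ∈ D j := by
    intro j hj
    rw [Set.Finite.mem_toFinset] at hj
    obtain ⟨s, hs, rfl⟩ := hj
    exact ⟨s, hs, rfl⟩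
  choose! a ha using hne
  have hsa : ∀ j, IsSelfAdjoint (E (D j)) := fun j => hE.isSelfAdjoint _ (hD j)
  have hid : ∀ j, E (D j) * E (D j) = E (D j) := fun j => hE.mul_self (hD j)
  have horth : ∀ i j, i ≠ j → E (D i) * E (D j) = 0 := fun i j hij =>
    hE.mul_eq_zero_of_disjoint (hD i) (hD j) (hDd hij)
  have hsum : ∑ j ∈ hfin.toFinset, E (D j) = E S := by
    rw [← hE.map_biUnion_finset _ D hD hDd, hU]
  refine ⟨hfin.toFinset, fun j => E (D j), a, hsa, hid, horth, hsum, fun j hj => (ha j hj).1, ?_⟩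
  refine ContinuousLinearMap.opNorm_le_bound _ hh.le fun x => ?_
  have hx : (T * E S - ∑ j ∈ hfin.toFinset, (a j : ℂ) • E (D j)) x
      = ∑ j ∈ hfin.toFinset, E (D j) (T x - (a j : ℂ) • x) := by
    rw [← hsum, Finset.mul_sum, ← Finset.sum_sub_distrib, sum_apply]
    refine Finset.sum_congr rfl fun j _ => ?_
    simp [hE.map_commute_apply (hD j)]
  rw [hx]
  refine le_of_sq_le_sq ?_ (by positivity)
  rw [norm_sum_sq_of_pairwise_inner_eq_zero]
  · calc ∑ j ∈ hfin.toFinset, ‖E (D j) (T x - (a j : ℂ) • x)‖ ^ 2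
        ≤ ∑ j ∈ hfin.toFinset, h ^ 2 * ‖E (D j) x‖ ^ 2 := by
          refine Finset.sum_le_sum fun j hj => ?_
          rw [← mul_pow]
          gcongr
          rw [map_sub, map_smul, ← hE.map_commute_apply (hD j)]
          refine hE.norm_sub_smul_le hT (hD j) hh.le (fun s hs => ?_) (hE.apply_apply (hD j) x)
          have h1 : ⌊s / h⌋ = ⌊a j / h⌋ := hs.2.trans (ha j hj).2.symm
          have h2 := Int.abs_sub_lt_one_of_floor_eq_floor h1
          rw [← sub_div, abs_div, abs_of_pos hh, div_lt_one hh] at h2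
          exact h2.le
      _ = h ^ 2 * ∑ j ∈ hfin.toFinset, ‖E (D j) x‖ ^ 2 := (Finset.mul_sum _ _ _).symm
      _ ≤ h ^ 2 * ‖x‖ ^ 2 := by
          gcongr
          exact sum_norm_sq_le_of_orthogonal _ _ hsa hid horth x
      _ = (h * ‖x‖) ^ 2 := by ring
  · intro i j hij
    rw [(hsa i).inner_apply_left, ← mul_apply_eq_comp, horth i j hij]
    simp

/-- The `π / 2` form of the `sin Θ` theorem for bounded self-adjoint operators. -/
theorem norm_mul_le_of_separated {A B : H →L[ℂ] H} {EA EB : Set ℝ → H →L[ℂ] H}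
    (hEA : IsSpectralMeasure A EA) (hEB : IsSpectralMeasure B EB) (hA : IsSelfAdjoint A)
    (hB : IsSelfAdjoint B) {S₁ S₂ : Set ℝ} (h₁ : MeasurableSet S₁) (h₂ : MeasurableSet S₂)
    (hb₁ : Bornology.IsBounded S₁) (hb₂ : Bornology.IsBounded S₂) {D : ℝ} (hD : 0 < D)
    (hsep : ∀ s ∈ S₁, ∀ t ∈ S₂, D ≤ |s - t|) :
    ‖EA S₁ * EB S₂‖ ≤ π / 2 * (‖A - B‖ / D) := by
  set X := EA S₁ * EB S₂ with hX
  have hP1 : ‖EA S₁‖ ≤ 1 := hEA.norm_le_one h₁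
  have hQ1 : ‖EB S₂‖ ≤ 1 := hEB.norm_le_one h₂
  have hX1 : ‖X‖ ≤ 1 := (norm_mul_le _ _).trans (mul_le_one₀ hP1 (norm_nonneg _) hQ1)
  have hPX : EA S₁ * X = X := by rw [hX, ← mul_assoc, hEA.mul_self h₁]
  have hXQ : X * EB S₂ = X := by rw [hX, mul_assoc, hEB.mul_self h₂]
  have key : ∀ h > 0, ‖X‖ ≤ π / 2 * ((‖A - B‖ + 2 * h) / D) := by
    intro h hh
    obtain ⟨J, P, a, hPsa, hPid, hPorth, hPsum, haS, hPA⟩ :=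
      hEA.exists_diagonal_approx hA h₁ hb₁ hh
    obtain ⟨K, Q, b, hQsa, hQid, hQorth, hQsum, hbS, hQB⟩ :=
      hEB.exists_diagonal_approx hB h₂ hb₂ hh
    refine (norm_le_of_diagonal_sylvester J K P Q hPsa hPid hPorth hQsa hQid hQorth a b hD
      (fun i hi k hk => hsep _ (haS i hi) _ (hbS k hk)) X ?_).trans ?_
    · rw [hPsum, hQsum, hPX, hXQ]
    set A' := ∑ j ∈ J, (a j : ℂ) • P j
    set B' := ∑ k ∈ K, (b k : ℂ) • Q k
    have hid : A' * X - X * B' = EA S₁ * (A - B) * EB S₂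
        + (X * (B * EB S₂ - B') - (A * EA S₁ - A') * X) := by
      have e1 : A * EA S₁ * X = EA S₁ * A * EB S₂ := by
        rw [mul_assoc, hPX, hX, ← mul_assoc, (hEA.commutes S₁ h₁).eq]
      have e2 : X * (B * EB S₂) = EA S₁ * B * EB S₂ := by
        rw [(hEB.commutes S₂ h₂).eq, ← mul_assoc, hXQ, hX, mul_assoc, mul_assoc,
          (hEB.commutes S₂ h₂).eq]
      rw [mul_sub X, sub_mul (A * EA S₁), e1, e2, mul_sub (EA S₁), sub_mul]
      abel
    rw [hid]
    have n1 : ‖EA S₁ * (A - B) * EB S₂‖ ≤ ‖A - B‖ :=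
      calc ‖EA S₁ * (A - B) * EB S₂‖ ≤ ‖EA S₁‖ * ‖A - B‖ * ‖EB S₂‖ := norm_mul₃_le
        _ ≤ 1 * ‖A - B‖ * 1 := by gcongr
        _ = ‖A - B‖ := by ring
    have n2 : ‖X * (B * EB S₂ - B')‖ ≤ h :=
      calc ‖X * (B * EB S₂ - B')‖ ≤ ‖X‖ * ‖B * EB S₂ - B'‖ := norm_mul_le _ _
        _ ≤ 1 * h := by gcongr
        _ = h := one_mul h
    have n3 : ‖(A * EA S₁ - A') * X‖ ≤ h :=
      calc ‖(A * EA S₁ - A') * X‖ ≤ ‖A * EA S₁ - A'‖ * ‖X‖ := norm_mul_le _ _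
        _ ≤ h * 1 := by gcongr
        _ = h := mul_one h
    gcongr
    refine (norm_add_le _ _).trans ?_
    linarith [norm_sub_le (X * (B * EB S₂ - B')) ((A * EA S₁ - A') * X)]
  have hlim : Tendsto (fun h : ℝ => π / 2 * ((‖A - B‖ + 2 * h) / D)) (𝓝[>] 0)
      (𝓝 (π / 2 * ((‖A - B‖ + 2 * 0) / D))) :=
    ((by fun_prop : Continuous fun h : ℝ => π / 2 * ((‖A - B‖ + 2 * h) / D)).tendsto 0).mono_left
      nhdsWithin_le_nhds
  rw [mul_zero, add_zero] at hlim
  exact ge_of_tendsto hlim (eventually_nhdsWithin_of_forall key)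

end IsSpectralMeasure

section Form

variable {H : Type*} [NormedAddCommGroup H] [InnerProductSpace ℂ H]

/-- Lower bound for the quadratic form of an off-diagonal perturbation on a two-component
vector. -/
lemma mul_norm_sq_le_re_inner_add {S V : H →L[ℂ] H} {x y : H} {a b c : ℝ}
    (hx : a * ‖x‖ ^ 2 ≤ (inner ℂ (S x) x).re) (hy : b * ‖y‖ ^ 2 ≤ (inner ℂ (S y) y).re)
    (hSxy : inner ℂ (S x) y = 0) (hSyx : inner ℂ (S y) x = 0) (hVx : inner ℂ (V x) x = 0)
    (hVy : inner ℂ (V y) y = 0) (hxy : inner ℂ x y = 0) (hca : c ≤ a) (hcb : c ≤ b)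
    (hv : ‖V‖ ^ 2 ≤ (a - c) * (b - c)) :
    c * ‖x + y‖ ^ 2 ≤ (inner ℂ ((S + V) (x + y)) (x + y)).re := by
  have hexp : inner ℂ ((S + V) (x + y)) (x + y) = inner ℂ (S x) x + inner ℂ (S y) y
      + (inner ℂ (V x) y + inner ℂ (V y) x) := by
    simp only [add_apply, map_add, inner_add_left, inner_add_right, hSxy, hSyx, hVx, hVy]
    ring
  have h1 : ‖inner ℂ (V x) y‖ ≤ ‖V‖ * ‖x‖ * ‖y‖ :=
    (norm_inner_le_norm _ _).trans (by gcongr; exact V.le_opNorm x)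
  have h2 : ‖inner ℂ (V y) x‖ ≤ ‖V‖ * ‖y‖ * ‖x‖ :=
    (norm_inner_le_norm _ _).trans (by gcongr; exact V.le_opNorm y)
  have h3 := (abs_le.mp ((Complex.abs_re_le_norm (inner ℂ (V x) y)).trans h1)).1
  have h4 := (abs_le.mp ((Complex.abs_re_le_norm (inner ℂ (V y) x)).trans h2)).1
  have h5 : 2 * (‖V‖ * ‖x‖ * ‖y‖) ≤ (a - c) * ‖x‖ ^ 2 + (b - c) * ‖y‖ ^ 2 := by
    have ha : 0 ≤ a - c := sub_nonneg.mpr hca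
    have hb : 0 ≤ b - c := sub_nonneg.mpr hcb
    refine le_of_sq_le_sq ?_ (by positivity)
    have h6 : (‖V‖ * ‖x‖ * ‖y‖) ^ 2 ≤ ((a - c) * ‖x‖ ^ 2) * ((b - c) * ‖y‖ ^ 2) := by
      calc (‖V‖ * ‖x‖ * ‖y‖) ^ 2 = ‖V‖ ^ 2 * (‖x‖ ^ 2 * ‖y‖ ^ 2) := by ring
        _ ≤ (a - c) * (b - c) * (‖x‖ ^ 2 * ‖y‖ ^ 2) := by gcongr
        _ = _ := by ring
    nlinarith [sq_nonneg ((a - c) * ‖x‖ ^ 2 - (b - c) * ‖y‖ ^ 2)]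
  rw [hexp, norm_add_sq_of_inner_eq_zero hxy, Complex.add_re, Complex.add_re, Complex.add_re]
  nlinarith

lemma re_inner_sub_smul (x y : H) (c : ℝ) :
    (inner ℂ (y - (c : ℂ) • x) x).re = (inner ℂ y x).re - c * ‖x‖ ^ 2 := by
  rw [inner_sub_left, inner_smul_left, inner_self_eq_norm_sq_to_K, Complex.sub_re,
    Complex.conj_ofReal, Complex.re_ofReal_mul]
  change _ - c * (((‖x‖ : ℝ) : ℂ) ^ 2).re = _
  rw [← Complex.ofReal_pow, Complex.ofReal_re]

variable [CompleteSpace H]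

/-- A symmetric operator whose form is bounded below by `c` on `z` and above by `-c` on `y`, with
`y` and `z` orthogonal, is bounded below by `c` at `y + z`. -/
lemma IsSelfAdjoint.mul_norm_le_of_indefinite {S : H →L[ℂ] H} (hS : IsSelfAdjoint S) {y z : H}
    {c : ℝ} (hyz : inner ℂ y z = 0) (hz : c * ‖z‖ ^ 2 ≤ (inner ℂ (S z) z).re)
    (hy : c * ‖y‖ ^ 2 ≤ -(inner ℂ (S y) y).re) : c * ‖y + z‖ ≤ ‖S (y + z)‖ := by
  have h1 : ‖z - y‖ = ‖y + z‖ := by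
    have e1 := norm_add_sq_of_inner_eq_zero hyz
    have e2 := norm_add_sq_of_inner_eq_zero (x := -y) (y := z)
      (by rw [inner_neg_left, hyz, neg_zero])
    rw [norm_neg, neg_add_eq_sub] at e2
    exact (sq_eq_sq₀ (norm_nonneg _) (norm_nonneg _)).mp (e2.trans e1.symm)
  have h2 : (inner ℂ (S y) z).re = (inner ℂ (S z) y).re := by
    rw [hS.inner_apply_left, ← inner_conj_symm, Complex.conj_re]
  have h3 : (inner ℂ (S (y + z)) (z - y)).re = (inner ℂ (S z) z).re - (inner ℂ (S y) y).re := by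
    simp only [map_add, inner_add_left, inner_sub_right, Complex.add_re, Complex.sub_re]
    linarith
  have h4 : (inner ℂ (S (y + z)) (z - y)).re ≤ ‖S (y + z)‖ * ‖y + z‖ := by
    rw [← h1]
    exact (Complex.re_le_norm _).trans (norm_inner_le_norm _ _)
  rcases (norm_nonneg (y + z)).eq_or_lt with h0 | h0
  · rw [← h0]
    simp
  · refine le_of_mul_le_mul_right ?_ h0
    rw [mul_assoc, ← sq, norm_add_sq_of_inner_eq_zero hyz, mul_add]
    linarith

end Form

namespace IsSpectralMeasure

variable {H : Type*} [NormedAddCommGroup H] [InnerProductSpace ℂ H] [CompleteSpace H]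
  {T : H →L[ℂ] H} {E : Set ℝ → H →L[ℂ] H}

lemma abs_re_inner_sub_le (hE : IsSpectralMeasure T E) (hT : IsSelfAdjoint T) {Δ : Set ℝ}
    (hΔ : MeasurableSet Δ) {c h : ℝ} (hh : 0 ≤ h) (hs : ∀ s ∈ Δ, |s - c| ≤ h) {x : H}
    (hx : E Δ x = x) : |(inner ℂ (T x) x).re - c * ‖x‖ ^ 2| ≤ h * ‖x‖ ^ 2 := by
  have h1 := hE.norm_sub_smul_le hT hΔ hh hs hx
  rw [← re_inner_sub_smul]
  refine (Complex.abs_re_le_norm _).trans ((norm_inner_le_norm _ _).trans ?_)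
  nlinarith [norm_nonneg x]

/-- On the range of `E Δ` for a bounded `Δ ⊆ [m, ∞)`, the form of `T` is bounded below by `m`. -/
lemma mul_norm_sq_le_re_inner (hE : IsSpectralMeasure T E) (hT : IsSelfAdjoint T) {Δ : Set ℝ}
    (hΔ : MeasurableSet Δ) (hb : Bornology.IsBounded Δ) {m : ℝ} (hm : ∀ s ∈ Δ, m ≤ s) {x : H}
    (hx : E Δ x = x) : m * ‖x‖ ^ 2 ≤ (inner ℂ (T x) x).re := by
  obtain ⟨R, hR⟩ := hb.subset_closedBall m
  have h1 := hE.abs_re_inner_sub_le hT hΔ (c := m + |R|) (abs_nonneg R) (fun s hs => by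
    have h1 := (abs_le.mp (Metric.mem_closedBall.mp (hR hs))).2
    have h2 := hm s hs
    rw [abs_le]
    constructor <;> linarith [le_abs_self R, abs_nonneg R]) hx
  linarith [(abs_le.mp h1).1]

/-- On the range of `E Δ` for a bounded `Δ ⊆ (-∞, m]`, the form of `T` is bounded above by `m`. -/
lemma re_inner_le_mul_norm_sq (hE : IsSpectralMeasure T E) (hT : IsSelfAdjoint T) {Δ : Set ℝ}
    (hΔ : MeasurableSet Δ) (hb : Bornology.IsBounded Δ) {m : ℝ} (hm : ∀ s ∈ Δ, s ≤ m) {x : H}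
    (hx : E Δ x = x) : (inner ℂ (T x) x).re ≤ m * ‖x‖ ^ 2 := by
  obtain ⟨R, hR⟩ := hb.subset_closedBall m
  have h1 := hE.abs_re_inner_sub_le hT hΔ (c := m - |R|) (abs_nonneg R) (fun s hs => by
    have h1 := (abs_le.mp (Metric.mem_closedBall.mp (hR hs))).1
    have h2 := hm s hs
    rw [abs_le]
    constructor <;> linarith [le_abs_self R, abs_nonneg R]) hx
  linarith [(abs_le.mp h1).2]

lemma inner_eq_zero_of_disjoint (hE : IsSpectralMeasure T E) {Δ₁ Δ₂ : Set ℝ}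
    (h₁ : MeasurableSet Δ₁) (h₂ : MeasurableSet Δ₂) (hd : Disjoint Δ₁ Δ₂) {x y : H}
    (hx : E Δ₁ x = x) (hy : E Δ₂ y = y) : inner ℂ x y = 0 := by
  rw [← hx, ← hy, (hE.isSelfAdjoint _ h₁).inner_apply_left, ← mul_apply_eq_comp,
    hE.mul_eq_zero_of_disjoint h₁ h₂ hd]
  simp

lemma inner_eq_zero_of_mul_mul_eq_zero (hE : IsSpectralMeasure T E) {Δ : Set ℝ}
    (hΔ : MeasurableSet Δ) {V : H →L[ℂ] H} (hV : E Δ * V * E Δ = 0) {x : H} (hx : E Δ x = x) :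
    inner ℂ (V x) x = 0 := by
  have h1 : E Δ (V (E Δ x)) = 0 := DFunLike.congr_fun hV x
  rw [hx] at h1
  conv_lhs => arg 3; rw [← hx]
  rw [← (hE.isSelfAdjoint _ hΔ).inner_apply_left, h1, inner_zero_left]

/-- Off-diagonal perturbations shift the resolvent set by at most `δ`. -/
theorem bounded_below_add_of_offdiagonal (hE : IsSpectralMeasure T E) (hT : IsSelfAdjoint T)
    {V : H →L[ℂ] H} (hV : IsSelfAdjoint V) {σ τ : Set ℝ} (hσ : MeasurableSet σ)
    (hτ : MeasurableSet τ) (hσb : Bornology.IsBounded σ) (hτb : Bornology.IsBounded τ)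
    (hdisj : Disjoint σ τ) (hnull : E (σ ∪ τ)ᶜ = 0) (hVσ : E σ * V * E σ = 0)
    (hVτ : E τ * V * E τ = 0) {d δ r l : ℝ} (hd : 0 ≤ d) (hδ : 0 ≤ δ) (hδd : ‖V‖ ^ 2 = δ * (δ + d))
    (hsep : ∀ s ∈ σ, ∀ t ∈ τ, d ≤ |s - t|) (hr : 0 < r) (hl : ∀ s ∈ σ ∪ τ, r ≤ |s - l|) (x : H) :
    (r - δ) * ‖x‖ ≤ ‖(T + V) x - (l : ℂ) • x‖ := by
  set S : H →L[ℂ] H := T - (l : ℂ) • (1 : H →L[ℂ] H) with hS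
  have hSx : ∀ u, S u = T u - (l : ℂ) • u := fun u => by simp [hS]
  have hSsa : IsSelfAdjoint S :=
    hT.sub (IsSelfAdjoint.smul (Complex.conj_ofReal l) (IsSelfAdjoint.one _))
  have hSre : ∀ u, (inner ℂ (S u) u).re = (inner ℂ (T u) u).re - l * ‖u‖ ^ 2 := by
    intro u
    rw [hSx, re_inner_sub_smul]
  have hSE : ∀ {Δ : Set ℝ}, MeasurableSet Δ → ∀ {u : H}, E Δ u = u → E Δ (S u) = S u := by
    intro Δ hΔ u hu
    rw [hSx, map_sub, map_smul, ← hE.map_commute_apply hΔ, hu]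
  -- the four spectral components of `x`
  have mσ₁ : MeasurableSet (σ ∩ Iio l) := hσ.inter measurableSet_Iio
  have mσ₂ : MeasurableSet (σ ∩ Ioi l) := hσ.inter measurableSet_Ioi
  have mτ₁ : MeasurableSet (τ ∩ Iio l) := hτ.inter measurableSet_Iio
  have mτ₂ : MeasurableSet (τ ∩ Ioi l) := hτ.inter measurableSet_Ioi
  have hlσ : l ∉ σ ∪ τ := fun h => by
    have := hl l h
    rw [sub_self, abs_zero] at this
    linarith
  have hd1 : Disjoint (Iio l) (Ioi l) := Iio_disjoint_Ioi_same
  have hsplit : ∀ {ρ : Set ℝ}, MeasurableSet ρ → l ∉ ρ →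
      E ρ = E (ρ ∩ Iio l) + E (ρ ∩ Ioi l) := by
    intro ρ hρ hlρ
    rw [← hE.map_union (hρ.inter measurableSet_Iio) (hρ.inter measurableSet_Ioi)
      (hd1.mono inter_subset_right inter_subset_right), ← inter_union_distrib_left,
      Iio_union_Ioi, inter_eq_self_of_subset_left (subset_compl_singleton_iff.mpr hlρ)]
  set y₁ := E (σ ∩ Iio l) x with hy₁
  set y₂ := E (τ ∩ Iio l) x with hy₂
  set z₁ := E (σ ∩ Ioi l) x with hz₁
  set z₂ := E (τ ∩ Ioi l) x with hz₂
  have ey₁ : E (σ ∩ Iio l) y₁ = y₁ := hE.apply_apply mσ₁ x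
  have ey₂ : E (τ ∩ Iio l) y₂ = y₂ := hE.apply_apply mτ₁ x
  have ez₁ : E (σ ∩ Ioi l) z₁ = z₁ := hE.apply_apply mσ₂ x
  have ez₂ : E (τ ∩ Ioi l) z₂ = z₂ := hE.apply_apply mτ₂ x
  have hx : x = (y₁ + y₂) + (z₁ + z₂) := by
    have h1 : (1 : H →L[ℂ] H) = E σ + E τ := by
      rw [← hE.map_union hσ hτ hdisj, ← sub_eq_zero, ← hE.map_compl (hσ.union hτ), hnull]
    have h2 := DFunLike.congr_fun h1 x
    rw [hsplit hσ fun h => hlσ (Or.inl h), hsplit hτ fun h => hlσ (Or.inr h)] at h2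
    simp only [add_apply, one_apply_eq_self, ← hy₁, ← hy₂, ← hz₁, ← hz₂] at h2
    conv_lhs => rw [h2]
    abel
  have hστ : ∀ I J : Set ℝ, Disjoint (σ ∩ I) (τ ∩ J) := fun I J =>
    hdisj.mono inter_subset_left inter_subset_left
  have hIJ : ∀ ρ ρ' : Set ℝ, Disjoint (ρ ∩ Iio l) (ρ' ∩ Ioi l) := fun ρ ρ' =>
    hd1.mono inter_subset_right inter_subset_right
  have hyz : inner ℂ (y₁ + y₂) (z₁ + z₂) = 0 := by
    rw [inner_add_left, inner_add_right, inner_add_right,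
      hE.inner_eq_zero_of_disjoint mσ₁ mσ₂ (hIJ _ _) ey₁ ez₁,
      hE.inner_eq_zero_of_disjoint mσ₁ mτ₂ (hIJ _ _) ey₁ ez₂,
      hE.inner_eq_zero_of_disjoint mτ₁ mσ₂ (hIJ _ _) ey₂ ez₁,
      hE.inner_eq_zero_of_disjoint mτ₁ mτ₂ (hIJ _ _) ey₂ ez₂]
    simp
  have hVσ' : ∀ {I : Set ℝ}, MeasurableSet I → ∀ {u : H}, E (σ ∩ I) u = u →
      inner ℂ (V u) u = 0 := fun hI _ hu =>
    hE.inner_eq_zero_of_mul_mul_eq_zero hσ hVσ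
      (hE.apply_eq_of_subset (hσ.inter hI) hσ inter_subset_left hu)
  have hVτ' : ∀ {I : Set ℝ}, MeasurableSet I → ∀ {u : H}, E (τ ∩ I) u = u →
      inner ℂ (V u) u = 0 := fun hI _ hu =>
    hE.inner_eq_zero_of_mul_mul_eq_zero hτ hVτ
      (hE.apply_eq_of_subset (hτ.inter hI) hτ inter_subset_left hu)
  have upper : ∀ {ρ : Set ℝ}, MeasurableSet ρ → Bornology.IsBounded ρ → ∀ {a : ℝ},
      (∀ s ∈ ρ ∩ Ioi l, l + a ≤ s) → ∀ {u : H}, E (ρ ∩ Ioi l) u = u →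
      a * ‖u‖ ^ 2 ≤ (inner ℂ (S u) u).re := by
    intro ρ hρ hρb a ha u hu
    have := hE.mul_norm_sq_le_re_inner hT (hρ.inter measurableSet_Ioi)
      (hρb.subset inter_subset_left) ha hu
    rw [hSre]
    linarith
  have lower : ∀ {ρ : Set ℝ}, MeasurableSet ρ → Bornology.IsBounded ρ → ∀ {a : ℝ},
      (∀ s ∈ ρ ∩ Iio l, s ≤ l - a) → ∀ {u : H}, E (ρ ∩ Iio l) u = u →
      a * ‖u‖ ^ 2 ≤ (inner ℂ ((-S) u) u).re := by
    intro ρ hρ hρb a ha u hu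
    have := hE.re_inner_le_mul_norm_sq hT (hρ.inter measurableSet_Iio)
      (hρb.subset inter_subset_left) ha hu
    rw [neg_apply, inner_neg_left, Complex.neg_re, hSre]
    linarith
  have hgt : ∀ s ∈ σ ∪ τ, l < s → l + r ≤ s := fun s hs hls => by
    have := hl s hs
    rw [abs_of_pos (by linarith)] at this
    linarith
  have hlt : ∀ s ∈ σ ∪ τ, s < l → s ≤ l - r := fun s hs hls => by
    have := hl s hs
    rw [abs_of_neg (by linarith)] at this
    linarith
  have hprod₁ : ‖V‖ ^ 2 ≤ (r - (r - δ)) * (r + d - (r - δ)) := by rw [hδd]; linarith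
  have hprod₂ : ‖V‖ ^ 2 ≤ (r + d - (r - δ)) * (r - (r - δ)) := by rw [hδd]; linarith
  have hz : (r - δ) * ‖z₁ + z₂‖ ^ 2 ≤ (inner ℂ ((S + V) (z₁ + z₂)) (z₁ + z₂)).re := by
    have o1 := hE.inner_eq_zero_of_disjoint mσ₂ mτ₂ (hστ _ _) (hSE mσ₂ ez₁) ez₂
    have o2 := hE.inner_eq_zero_of_disjoint mτ₂ mσ₂ (hστ _ _).symm (hSE mτ₂ ez₂) ez₁
    have o3 := hE.inner_eq_zero_of_disjoint mσ₂ mτ₂ (hστ _ _) ez₁ ez₂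
    have v1 := hVσ' measurableSet_Ioi ez₁
    have v2 := hVτ' measurableSet_Ioi ez₂
    by_cases hfar : ∀ s ∈ σ ∩ Ioi l, l + (r + d) ≤ s
    · exact mul_norm_sq_le_re_inner_add (upper hσ hσb hfar ez₁)
        (upper hτ hτb (fun s hs => hgt s (Or.inr hs.1) hs.2) ez₂) o1 o2 v1 v2 o3
        (by linarith) (by linarith) hprod₂
    · push Not at hfar
      obtain ⟨s, hs, hs'⟩ := hfar
      refine mul_norm_sq_le_re_inner_add (upper hσ hσb (fun s hs => hgt s (Or.inl hs.1) hs.2) ez₁)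
        (upper hτ hτb (a := r + d) (fun t ht => ?_) ez₂) o1 o2 v1 v2 o3
        (by linarith) (by linarith) hprod₁
      have h1 := hgt s (Or.inl hs.1) hs.2
      have h2 := hgt t (Or.inr ht.1) ht.2
      have h3 := hsep s hs.1 t ht.1
      by_contra! h4
      have : |s - t| < d := by rw [abs_lt]; constructor <;> linarith
      linarith
  have hy : (r - δ) * ‖y₁ + y₂‖ ^ 2 ≤ -(inner ℂ ((S + V) (y₁ + y₂)) (y₁ + y₂)).re := by
    have hneg : -(inner ℂ ((S + V) (y₁ + y₂)) (y₁ + y₂)).re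
        = (inner ℂ ((-S + -V) (y₁ + y₂)) (y₁ + y₂)).re := by
      rw [← neg_add, neg_apply, inner_neg_left, Complex.neg_re]
    rw [hneg]
    have o1 := hE.inner_eq_zero_of_disjoint mσ₁ mτ₁ (hστ _ _) (hSE mσ₁ ey₁) ey₂
    have o2 := hE.inner_eq_zero_of_disjoint mτ₁ mσ₁ (hστ _ _).symm (hSE mτ₁ ey₂) ey₁
    have o3 := hE.inner_eq_zero_of_disjoint mσ₁ mτ₁ (hστ _ _) ey₁ ey₂
    have v1 := hVσ' measurableSet_Iio ey₁
    have v2 := hVτ' measurableSet_Iio ey₂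
    have n : ∀ (R : H →L[ℂ] H) {u w : H}, inner ℂ (R u) w = 0 → inner ℂ ((-R) u) w = 0 :=
      fun R u w h => by rw [neg_apply, inner_neg_left, h, neg_zero]
    by_cases hfar : ∀ s ∈ σ ∩ Iio l, s ≤ l - (r + d)
    · exact mul_norm_sq_le_re_inner_add (lower hσ hσb hfar ey₁)
        (lower hτ hτb (fun s hs => hlt s (Or.inr hs.1) hs.2) ey₂) (n S o1) (n S o2) (n V v1)
        (n V v2) o3 (by linarith) (by linarith) (by rwa [norm_neg])
    · push Not at hfar
      obtain ⟨s, hs, hs'⟩ := hfar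
      refine mul_norm_sq_le_re_inner_add (lower hσ hσb (fun s hs => hlt s (Or.inl hs.1) hs.2) ey₁)
        (lower hτ hτb (a := r + d) (fun t ht => ?_) ey₂) (n S o1) (n S o2) (n V v1)
        (n V v2) o3 (by linarith) (by linarith) (by rwa [norm_neg])
      have h1 := hlt s (Or.inl hs.1) hs.2
      have h2 := hlt t (Or.inr ht.1) ht.2
      have h3 := hsep s hs.1 t ht.1
      by_contra! h4
      have : |s - t| < d := by rw [abs_lt]; constructor <;> linarith
      linarith
  have hfinal := (hSsa.add hV).mul_norm_le_of_indefinite hyz hz hy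
  rw [← hx] at hfinal
  rwa [show (T + V) x - (l : ℂ) • x = (S + V) x by rw [add_apply, add_apply, hSx]; abel]

end IsSpectralMeasure

section Numeric

lemma mul_tan_half_arctan_spec {v d : ℝ} (hv : 0 ≤ v) (hd : 0 < d) :
    0 ≤ v * Real.tan (Real.arctan (2 * v / d) / 2) ∧
    v ^ 2 = v * Real.tan (Real.arctan (2 * v / d) / 2)
      * (v * Real.tan (Real.arctan (2 * v / d) / 2) + d) := by
  set θ := Real.arctan (2 * v / d) with hθ
  set t := Real.tan (θ / 2) with ht
  have hθ0 : 0 ≤ θ := Real.arctan_nonneg.mpr (by positivity)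
  have hθ1 : θ < π / 2 := Real.arctan_lt_pi_div_two _
  have ht0 : 0 ≤ t := Real.tan_nonneg_of_nonneg_of_le_pi_div_two (by linarith) (by linarith)
  have ht1 : t < 1 := by
    rw [← Real.tan_pi_div_four]
    exact Real.tan_lt_tan_of_nonneg_of_lt_pi_div_two (by linarith) (by linarith [Real.pi_pos])
      (by linarith)
  have hden : 0 < 1 - t ^ 2 := by nlinarith
  have h1 : 2 * v / d = 2 * t / (1 - t ^ 2) := by
    rw [← Real.tan_arctan (2 * v / d), ← hθ, ht, ← Real.tan_two_mul]
    congr 1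
    ring
  have h2 : v * (1 - t ^ 2) = d * t := by
    rw [div_eq_div_iff hd.ne' hden.ne'] at h1
    linarith
  refine ⟨by positivity, ?_⟩
  linear_combination v * h2

lemma pi_div_two_mul_lt_sub {v d δ : ℝ} (hd : 0 < d) (hδ : 0 ≤ δ)
    (hδd : v ^ 2 = δ * (δ + d))
    (hv : v < (3 * π - Real.sqrt (π ^ 2 + 32)) / (π ^ 2 - 4) * d) :
    π / 2 * v < d - δ := by
  have hpi : 3 < π := Real.pi_gt_three
  set w := Real.sqrt (π ^ 2 + 32) with hw
  have hw2 : w ^ 2 = π ^ 2 + 32 := Real.sq_sqrt (by positivity)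
  have hw0 : 0 ≤ w := Real.sqrt_nonneg _
  have hp : 0 < π ^ 2 - 4 := by nlinarith
  have h1 : w * d < 3 * π * d - (π ^ 2 - 4) * v := by
    rw [div_mul_eq_mul_div, lt_div_iff₀ hp] at hv
    linarith
  have hsq : (w * d) ^ 2 < (3 * π * d - (π ^ 2 - 4) * v) ^ 2 :=
    pow_lt_pow_left₀ h1 (by positivity) two_ne_zero
  have hQ : 0 < (π ^ 2 - 4) * v ^ 2 - 6 * π * d * v + 8 * d ^ 2 := by
    rw [mul_pow, hw2] at hsq
    refine pos_of_mul_pos_right (a := π ^ 2 - 4) ?_ hp.le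
    linarith
  have hsmall : π * v < 2 * d := by
    by_contra! h2
    have h3 : π * w * d < (π ^ 2 + 8) * d := by nlinarith
    have h4 : π * w < π ^ 2 + 8 := lt_of_mul_lt_mul_right h3 hd.le
    have h5 : (π * w) ^ 2 < (π ^ 2 + 8) ^ 2 :=
      pow_lt_pow_left₀ h4 (by positivity) two_ne_zero
    rw [mul_pow, hw2] at h5
    nlinarith
  by_contra! h2
  have h3 : 0 ≤ d - π / 2 * v := by linarith
  have h4 : (d - π / 2 * v) * (d - π / 2 * v + d) ≤ δ * (δ + d) := by
    have : d - π / 2 * v ≤ δ := by linarith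
    gcongr
  nlinarith

lemma lt_half_of_pi_div_two_mul_lt_sub {v d δ : ℝ} (hv : 0 ≤ v) (hd : 0 < d)
    (hδd : v ^ 2 = δ * (δ + d)) (h : π / 2 * v < d - δ) : δ < d / 2 := by
  have hpi : 3 < π := Real.pi_gt_three
  by_contra! h1
  have h2 : v ≤ d / 3 := by nlinarith
  have h3 : d / 2 * (d / 2 + d) ≤ δ * (δ + d) := by
    have : 0 ≤ δ := by linarith
    gcongr
  nlinarith

end Numeric

section Projections

variable {H : Type*} [NormedAddCommGroup H] [InnerProductSpace ℂ H]

lemma exists_bounded_below_of_notMem_spectrum {T : H →L[ℂ] H} {l : ℝ} (hl : l ∉ spectrum ℝ T) :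
    ∃ c > 0, ∀ x, c * ‖x‖ ≤ ‖T x - (l : ℂ) • x‖ := by
  rw [spectrum.notMem_iff] at hl
  obtain ⟨u, hu⟩ := hl
  refine ⟨(‖((u⁻¹ : (H →L[ℂ] H)ˣ) : H →L[ℂ] H)‖ + 1)⁻¹, by positivity, fun x => ?_⟩
  have h1 : ((u⁻¹ : (H →L[ℂ] H)ˣ) : H →L[ℂ] H) ((u : H →L[ℂ] H) x) = x := by
    rw [← mul_apply_eq_comp, Units.inv_mul, one_apply_eq_self]
  have h2 : ‖(u : H →L[ℂ] H) x‖ = ‖T x - (l : ℂ) • x‖ := by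
    rw [hu, ← norm_neg, Algebra.algebraMap_eq_smul_one]
    congr 1
    simp
  rw [inv_mul_le_iff₀ (by positivity), ← h2]
  calc ‖x‖ = ‖((u⁻¹ : (H →L[ℂ] H)ˣ) : H →L[ℂ] H) ((u : H →L[ℂ] H) x)‖ := by rw [h1]
    _ ≤ ‖((u⁻¹ : (H →L[ℂ] H)ˣ) : H →L[ℂ] H)‖ * ‖(u : H →L[ℂ] H) x‖ :=
      ContinuousLinearMap.le_opNorm _ _
    _ ≤ _ := by gcongr; linarith

variable [CompleteSpace H]

lemma norm_sub_le_of_projections {P Q : H →L[ℂ] H} (hP : IsSelfAdjoint P) (hP2 : P * P = P)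
    (hQ : IsSelfAdjoint Q) (hQ2 : Q * Q = Q) {k : ℝ} (h₁ : ‖P * (1 - Q)‖ ≤ k)
    (h₂ : ‖(1 - P) * Q‖ ≤ k) : ‖P - Q‖ ≤ k := by
  have hk : 0 ≤ k := (norm_nonneg _).trans h₁
  refine (P - Q).opNorm_le_bound hk fun x => ?_
  have hPP : ∀ u, P (P u) = P u := fun u => DFunLike.congr_fun hP2 u
  have hQQ : ∀ u, Q (Q u) = Q u := fun u => DFunLike.congr_fun hQ2 u
  set u := (P * (1 - Q)) x with hu
  set w := ((1 - P) * Q) x with hw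
  have hu' : u = P (x - Q x) := by simp [hu]
  have hw' : w = Q x - P (Q x) := by simp [hw]
  have hsub : (P - Q) x = u + -w := by
    rw [hu', hw', sub_apply, map_sub]
    abel
  have horth : inner ℂ u (-w) = 0 := by
    rw [hu', hP.inner_apply_left, map_neg, hw', map_sub, hPP, sub_self, neg_zero,
      inner_zero_right]
  have nu : ‖u‖ ≤ k * ‖x - Q x‖ := by
    have := (P * (1 - Q)).le_of_opNorm_le h₁ (x - Q x)
    have e : (P * (1 - Q)) (x - Q x) = u := by simp [hu', hQQ]
    rwa [e] at this
  have nw : ‖w‖ ≤ k * ‖Q x‖ := by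
    have := ((1 - P) * Q).le_of_opNorm_le h₂ (Q x)
    have e : ((1 - P) * Q) (Q x) = w := by simp [hw', hQQ]
    rwa [e] at this
  have hx : ‖x‖ ^ 2 = ‖Q x‖ ^ 2 + ‖x - Q x‖ ^ 2 := by
    rw [← norm_add_sq_of_inner_eq_zero, add_sub_cancel]
    rw [hQ.inner_apply_left, map_sub, hQQ, sub_self, inner_zero_right]
  refine le_of_sq_le_sq ?_ (by positivity)
  rw [hsub, norm_add_sq_of_inner_eq_zero horth, norm_neg, mul_pow, hx]
  calc ‖u‖ ^ 2 + ‖w‖ ^ 2 ≤ (k * ‖x - Q x‖) ^ 2 + (k * ‖Q x‖) ^ 2 := by gcongr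
    _ = _ := by ring

end Projections

namespace IsSpectralMeasure

variable {H : Type*} [NormedAddCommGroup H] [InnerProductSpace ℂ H] [CompleteSpace H]
  {T : H →L[ℂ] H} {E : Set ℝ → H →L[ℂ] H}

lemma eq_of_subset_of_diff_null (hE : IsSpectralMeasure T E) {Δ₁ Δ₂ N : Set ℝ}
    (h₁ : MeasurableSet Δ₁) (h₂ : MeasurableSet Δ₂) (hN : MeasurableSet N) (hs : Δ₁ ⊆ Δ₂)
    (hd : Δ₂ \ Δ₁ ⊆ N) (hN0 : E N = 0) : E Δ₂ = E Δ₁ := by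
  rw [← union_sdiff_cancel hs, hE.map_union h₁ (h₂.diff h₁) disjoint_sdiff_right,
    hE.eq_zero_of_subset (h₂.diff h₁) hN hd hN0, add_zero]

lemma compl_spectrum_eq_zero (hE : IsSpectralMeasure T E) (hT : IsSelfAdjoint T)
    (hm : MeasurableSet (spectrum ℝ T)) : E (spectrum ℝ T)ᶜ = 0 := by
  refine hE.eq_zero_of_locally_null hm.compl fun l hl => ?_
  obtain ⟨c, hc, hb⟩ := exists_bounded_below_of_notMem_spectrum hl
  exact ⟨c / 2, by positivity, hE.eq_zero_of_bounded_below hT hc hb⟩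

end IsSpectralMeasure

section Separation

lemma le_infDist_add_infDist {σ τ : Set ℝ} (hσ : σ.Nonempty) (hτ : τ.Nonempty)
    (hσc : IsClosed σ) (hτc : IsClosed τ) {d : ℝ} (hsep : ∀ s ∈ σ, ∀ t ∈ τ, d ≤ |s - t|) (x : ℝ) :
    d ≤ Metric.infDist x σ + Metric.infDist x τ := by
  obtain ⟨p, hp, hp'⟩ := hσc.exists_infDist_eq_dist hσ x
  obtain ⟨q, hq, hq'⟩ := hτc.exists_infDist_eq_dist hτ x
  rw [hp', hq', dist_comm x p]
  refine (hsep p hp q hq).trans ?_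
  rw [← Real.dist_eq]
  exact dist_triangle _ _ _

lemma isBounded_setOf_infDist_le {σ : Set ℝ} (hσ : σ.Nonempty) (hσc : IsClosed σ)
    (hσb : Bornology.IsBounded σ) (δ : ℝ) : Bornology.IsBounded {x | Metric.infDist x σ ≤ δ} := by
  refine (hσb.cthickening (δ := δ)).subset fun x hx => ?_
  obtain ⟨p, hp, hp'⟩ := hσc.exists_infDist_eq_dist hσ x
  exact Metric.mem_cthickening_of_dist_le x p δ σ hp (hp' ▸ hx)

end Separation

end Auxiliary

/-- **Theorem A (ii) / Theorem 2.4.** Under the off-diagonal hypotheses, if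
`‖V‖ < c_π d` with `c_π = (3π − √(π² + 32))/(π² − 4)`, then
`‖E_A(σ) − E_B(O_{d/2}(σ))‖ ≤ (π/2) ‖V‖/(d − δ_V) < 1`. -/
theorem norm_diff_spectral_projections_lt_one
    {H : Type*} [NormedAddCommGroup H] [InnerProductSpace ℂ H] [CompleteSpace H]
    [TopologicalSpace.SeparableSpace H]
    (A V B : H →L[ℂ] H) (hA : IsSelfAdjoint A) (hV : IsSelfAdjoint V) (hB : B = A + V)
    (σ Sig : Set ℝ) (hσc : IsClosed σ) (hSigc : IsClosed Sig) (hdisj : Disjoint σ Sig)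
    (hspec : spectrum ℝ A = σ ∪ Sig)
    (d : ℝ) (hd : d = sInf (Set.image2 dist σ Sig)) (hd0 : 0 < d)
    (EA EB : Set ℝ → H →L[ℂ] H) (hEA : IsSpectralMeasure A EA) (hEB : IsSpectralMeasure B EB)
    (hoff₁ : EA σ * V * EA σ = 0) (hoff₂ : EA Sig * V * EA Sig = 0)
    (δ : ℝ) (hδ : δ = ‖V‖ * Real.tan (Real.arctan (2 * ‖V‖ / d) / 2))
    (hnorm : ‖V‖ < (3 * π - Real.sqrt (π ^ 2 + 32)) / (π ^ 2 - 4) * d) :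
    ‖EA σ - EB (Metric.thickening (d / 2) σ)‖ ≤ π / 2 * ‖V‖ / (d - δ) ∧
    π / 2 * ‖V‖ / (d - δ) < 1 := by
  have hv0 : 0 ≤ ‖V‖ := norm_nonneg V
  obtain ⟨hδ0, hδd⟩ := mul_tan_half_arctan_spec hv0 hd0
  rw [← hδ] at hδ0 hδd
  have hlt := pi_div_two_mul_lt_sub hd0 hδ0 hδd hnorm
  have hδ2 : δ < d / 2 := lt_half_of_pi_div_two_mul_lt_sub hv0 hd0 hδd hlt
  have hD : 0 < d - δ := by linarith
  refine ⟨?_, by rwa [div_lt_one hD]⟩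
  have hBsa : IsSelfAdjoint B := hB ▸ hA.add hV
  have hsep : ∀ s ∈ σ, ∀ t ∈ Sig, d ≤ |s - t| := fun s hs t ht => by
    rw [hd, ← Real.dist_eq]
    refine csInf_le ⟨0, ?_⟩ (Set.mem_image2_of_mem hs ht)
    rintro _ ⟨a, _, b, _, rfl⟩
    exact dist_nonneg
  have hne : (Set.image2 dist σ Sig).Nonempty := by
    by_contra h
    rw [Set.not_nonempty_iff_eq_empty.mp h, Real.sInf_empty] at hd
    exact hd0.ne' hd
  obtain ⟨hσne, hSigne⟩ := Set.image2_nonempty_iff.mp hne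
  have hbdd : Bornology.IsBounded (σ ∪ Sig) := hspec ▸ spectrum.isBounded A
  have hσb : Bornology.IsBounded σ := hbdd.subset Set.subset_union_left
  have hSigb : Bornology.IsBounded Sig := hbdd.subset Set.subset_union_right
  have hσm := hσc.measurableSet
  have hSigm := hSigc.measurableSet
  have hAnull : EA (σ ∪ Sig)ᶜ = 0 := by
    rw [← hspec]
    exact hEA.compl_spectrum_eq_zero hA (hspec ▸ hσm.union hSigm)
  set σ' : Set ℝ := {x | Metric.infDist x σ ≤ δ} with hσ'
  set τ' : Set ℝ := {x | Metric.infDist x Sig ≤ δ} with hτ'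
  have hσ'm : MeasurableSet σ' := measurableSet_le measurable_infDist measurable_const
  have hτ'm : MeasurableSet τ' := measurableSet_le measurable_infDist measurable_const
  have hσ'b : Bornology.IsBounded σ' := isBounded_setOf_infDist_le hσne hσc hσb δ
  have hτ'b : Bornology.IsBounded τ' := isBounded_setOf_infDist_le hSigne hSigc hSigb δ
  have hsum := le_infDist_add_infDist hσne hSigne hσc hSigc hsep
  have hNm : MeasurableSet (σ' ∪ τ')ᶜ := (hσ'm.union hτ'm).compl
  have hBnull : EB (σ' ∪ τ')ᶜ = 0 := by
    refine hEB.eq_zero_of_locally_null hNm fun l hl => ?_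
    rw [Set.mem_compl_iff, Set.mem_union, not_or] at hl
    have h1 : δ < Metric.infDist l σ := not_le.mp hl.1
    have h2 : δ < Metric.infDist l Sig := not_le.mp hl.2
    have hr : δ < min (Metric.infDist l σ) (Metric.infDist l Sig) := lt_min h1 h2
    refine ⟨_, half_pos (sub_pos.mpr hr), hEB.eq_zero_of_bounded_below hBsa (sub_pos.mpr hr) ?_⟩
    intro x
    rw [hB]
    refine hEA.bounded_below_add_of_offdiagonal hA hV hσm hSigm hσb hSigb hdisj hAnull hoff₁ hoff₂
      hd0.le hδ0 hδd hsep (hδ0.trans_lt hr) ?_ x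
    rintro s (hs | hs) <;> rw [← Real.dist_eq, dist_comm]
    · exact (min_le_left _ _).trans (Metric.infDist_le_dist_of_mem hs)
    · exact (min_le_right _ _).trans (Metric.infDist_le_dist_of_mem hs)
  set O := Metric.thickening (d / 2) σ with hO
  have hOm : MeasurableSet O := Metric.isOpen_thickening.measurableSet
  have hmemO : ∀ x, x ∈ O ↔ Metric.infDist x σ < d / 2 := fun x =>
    Metric.mem_thickening_iff_infDist_lt hσne
  have hQ : EB O = EB σ' := by
    refine hEB.eq_of_subset_of_diff_null hσ'm hOm hNm
      (fun x (hx : Metric.infDist x σ ≤ δ) => (hmemO x).mpr (by linarith)) ?_ hBnull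
    rintro x ⟨hxO, hx⟩ (hx' | (hx' : Metric.infDist x Sig ≤ δ))
    · exact hx hx'
    · linarith [(hmemO x).mp hxO, hsum x]
  have hQc : 1 - EB O = EB τ' := by
    rw [← hEB.map_compl hOm]
    refine hEB.eq_of_subset_of_diff_null hτ'm hOm.compl hNm
      (fun x (hx : Metric.infDist x Sig ≤ δ) hxO => by
        linarith [(hmemO x).mp hxO, hsum x]) ?_ hBnull
    rintro x ⟨hxO, hx⟩ ((hx' : Metric.infDist x σ ≤ δ) | hx')
    · exact hxO ((hmemO x).mpr (by linarith))
    · exact hx hx'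
  have hPc : 1 - EA σ = EA Sig := by
    rw [← hEA.map_compl hσm]
    refine hEA.eq_of_subset_of_diff_null hSigm hσm.compl (hσm.union hSigm).compl
      hdisj.symm.subset_compl_right ?_ hAnull
    rintro x ⟨hxσ, hxS⟩ (hx | hx)
    · exact hxσ hx
    · exact hxS hx
  have hAB : ‖A - B‖ = ‖V‖ := by rw [hB, sub_add_cancel_left, norm_neg]
  have hk : π / 2 * ‖V‖ / (d - δ) = π / 2 * (‖A - B‖ / (d - δ)) := by rw [hAB]; ring
  rw [hk]
  refine norm_sub_le_of_projections (hEA.isSelfAdjoint σ hσm) (hEA.mul_self hσm)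
    (hEB.isSelfAdjoint O hOm) (hEB.mul_self hOm) ?_ ?_
  · rw [hQc]
    refine hEA.norm_mul_le_of_separated hEB hA hBsa hσm hτ'm hσb hτ'b hD
      fun s hs t (ht : Metric.infDist t Sig ≤ δ) => ?_
    have h1 : Metric.infDist t σ ≤ dist t s := Metric.infDist_le_dist_of_mem hs
    rw [← Real.dist_eq, dist_comm]
    linarith [hsum t]
  · rw [hPc, hQ]
    refine hEA.norm_mul_le_of_separated hEB hA hBsa hSigm hσ'm hSigb hσ'b hD
      fun s hs t (ht : Metric.infDist t σ ≤ δ) => ?_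
    have h1 : Metric.infDist t Sig ≤ dist t s := Metric.infDist_le_dist_of_mem hs
    rw [← Real.dist_eq, dist_comm]
    linarith [hsum t]
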